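/- arXiv:2311.18227 — 5 statements merged into one kernel-verified Lean document; each statement's English description precedes it below -/
import Mathlib

section
/- Let n ≥ 2 and let σ be a permutation of {1,…,n} that avoids 1324, such that the position of n in σ is exactly one more than the position of 1 (i.e., σ⁻¹(n) = σ⁻¹(1) + 1). Then, writing p = σ⁻¹(1), the prefix word σ(1)…σ(p−1) avoids the pattern 132 (there are no i < j < k ≤ p−1 with σ(i) < σ(k) < σ(j)) and the suffix word σ(p+2)…σ(n) avoids the pattern 213 (there are no p+1 < i < j < k ≤ n with σ(j) < σ(i) < σ(k)). -/
/-- A permutation of `{1,…,n}` (encoded as `Equiv.Perm (Fin n)` with 0-based values)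
avoids the pattern 1324 if there are no indices `i < j < k < l` with
`σ i < σ k < σ j < σ l`. -/
def Avoids1324 {n : ℕ} (σ : Equiv.Perm (Fin n)) : Prop :=
  ¬ ∃ i j k l : Fin n, i < j ∧ j < k ∧ k < l ∧ σ i < σ k ∧ σ k < σ j ∧ σ j < σ l

/-- if `σ` avoids 1324 and the entry `n` is immediately to the right of the
entry `1` (position of `n` = position of `1` + 1), then the prefix before the `1`
avoids 132 and the suffix after the `n` avoids 213. -/
theorem stmt_0 (n : ℕ) (hn : 2 ≤ n) (σ : Equiv.Perm (Fin n))
    (havoid : Avoids1324 σ)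
    (hadj : ((σ.symm ⟨n - 1, by omega⟩ : Fin n) : ℕ) =
      ((σ.symm ⟨0, by omega⟩ : Fin n) : ℕ) + 1) :
    (¬ ∃ i j k : Fin n, i < j ∧ j < k ∧ k < σ.symm ⟨0, by omega⟩ ∧
        σ i < σ k ∧ σ k < σ j) ∧
    (¬ ∃ i j k : Fin n, σ.symm ⟨n - 1, by omega⟩ < i ∧ i < j ∧ j < k ∧
        σ j < σ i ∧ σ i < σ k) := by
  have h0 : (σ (σ.symm ⟨0, by omega⟩)) = ⟨0, by omega⟩ := σ.apply_symm_apply _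
  have h1 : (σ (σ.symm ⟨n - 1, by omega⟩)) = ⟨n - 1, by omega⟩ := σ.apply_symm_apply _
  generalize σ.symm ⟨0, by omega⟩ = p at *
  generalize σ.symm ⟨n - 1, by omega⟩ = q at *
  have hpq : p < q := by
    rw [Fin.lt_def]; omega
  constructor
  · rintro ⟨i, j, k, hij, hjk, hk, h2, h3⟩
    refine havoid ⟨i, j, k, q, hij, hjk, hk.trans hpq, h2, h3, ?_⟩
    have hne : σ j ≠ σ q := fun h => by
      have := σ.injective h
      exact absurd this (ne_of_lt (hjk.trans (hk.trans hpq)))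
    rw [h1] at hne ⊢
    rw [Ne, Fin.ext_iff] at hne
    rw [Fin.lt_def]
    have := (σ j).isLt
    simp only at hne ⊢
    omega
  · rintro ⟨i, j, k, hi, hij, hjk, h2, h3⟩
    refine havoid ⟨p, i, j, k, hpq.trans hi, hij, hjk, ?_, h2, h3⟩
    have hne : σ j ≠ σ p := fun h => by
      have := σ.injective h
      exact absurd this.symm (ne_of_lt (hpq.trans (hi.trans hij)))
    rw [h0] at hne ⊢
    rw [Ne, Fin.ext_iff] at hne
    rw [Fin.lt_def]
    simp only at hne ⊢
    omega
end

section
/- For every n ≥ 2, the number of permutations σ of {1,…,n} avoiding 1324 with σ⁻¹(n) = σ⁻¹(1) + 1 equals the number of pairs (ρ, m), where ρ is a permutation of {1,…,n−2} avoiding 1324, 0 ≤ m ≤ n−2, the subsequence of ρ consisting of the entries with values ≤ m avoids the pattern 132 (no positions i < j < k with ρ(i), ρ(j), ρ(k) ≤ m and ρ(i) < ρ(k) < ρ(j)), and the subsequence of ρ consisting of the entries with values > m avoids the pattern 213 (no positions i < j < k with ρ(i), ρ(j), ρ(k) > m and ρ(j) < ρ(i) < ρ(k)). (Such pairs (ρ,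 m) are the 1324-avoiding vertical dominoes with n−2 points.) -/
def DomRel {N : ℕ} (ρ : Equiv.Perm (Fin N)) (m : ℕ) (τ : Equiv.Perm (Fin (N + 2))) : Prop :=
  (τ 0 : ℕ) = m ∧ (τ (Fin.last (N + 1)) : ℕ) = m + 1 ∧
    ∀ i : Fin N, (τ i.succ.castSucc : ℕ) = if (ρ i : ℕ) < m then (ρ i : ℕ) else (ρ i : ℕ) + 2

theorem fin_cases3 {N : ℕ} (x : Fin (N + 2)) :
    x = 0 ∨ x = Fin.last (N + 1) ∨ ∃ i : Fin N, x = i.succ.castSucc := by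
  by_cases h0 : (x : ℕ) = 0
  · left; ext; simpa using h0
  by_cases h1 : (x : ℕ) = N + 1
  · right; left; ext; simpa using h1
  right; right
  refine ⟨⟨x - 1, by omega⟩, ?_⟩
  ext; simp; omega

theorem domRel_ex {N : ℕ} (ρ : Equiv.Perm (Fin N)) (m : ℕ) (hm : m ≤ N) :
    ∃ τ, DomRel ρ m τ := by
  let f : Fin (N + 2) → Fin (N + 2) := fun x =>
    if h0 : (x : ℕ) = 0 then ⟨m, by omega⟩
    else if h1 : (x : ℕ) = N + 1 then ⟨m + 1, by omega⟩
    else if (ρ ⟨x - 1, by omega⟩ : ℕ) < m then ⟨ρ ⟨x - 1, by omega⟩, by omega⟩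
    else ⟨ρ ⟨x - 1, by omega⟩ + 2, by omega⟩
  have f0 : (f 0 : ℕ) = m := by simp [f]
  have f1 : (f (Fin.last (N + 1)) : ℕ) = m + 1 := by simp [f]
  have f2 : ∀ i : Fin N, (f i.succ.castSucc : ℕ) =
      if (ρ i : ℕ) < m then (ρ i : ℕ) else (ρ i : ℕ) + 2 := by
    intro i
    have := i.2
    have h : (i : ℕ) ≠ N := by omega
    simp only [f]
    simp [h]
    split_ifs <;> rfl
  have hf : Function.Injective f := by
    intro x y hxy
    have hxy' : (f x : ℕ) = f y := by rw [hxy]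
    rcases fin_cases3 x with rfl | rfl | ⟨i, rfl⟩ <;>
    rcases fin_cases3 y with rfl | rfl | ⟨j, rfl⟩ <;>
    simp only [f0, f1, f2] at hxy' <;> try rfl
    all_goals try (exfalso; (try split_ifs at hxy') <;> omega)
    have : (ρ i : ℕ) = ρ j := by split_ifs at hxy' <;> omega
    have := ρ.injective (Fin.ext this)
    rw [this]
  exact ⟨Equiv.ofBijective f (Finite.injective_iff_bijective.mp hf), f0, f1, f2⟩

theorem domRel_ex2 {N : ℕ} (τ : Equiv.Perm (Fin (N + 2)))
    (h : (τ (Fin.last (N + 1)) : ℕ) = (τ 0 : ℕ) + 1) :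
    ∃ ρ, DomRel ρ (τ 0 : ℕ) τ := by
  have ne0 : ∀ i : Fin N, (τ i.succ.castSucc : ℕ) ≠ τ 0 := by
    intro i hi
    have := congrArg Fin.val (τ.injective (Fin.ext hi))
    simp at this
  have ne1 : ∀ i : Fin N, (τ i.succ.castSucc : ℕ) ≠ (τ 0 : ℕ) + 1 := by
    intro i hi
    rw [← h] at hi
    have := congrArg Fin.val (τ.injective (Fin.ext hi))
    simp at this
    omega
  have hl := (τ (Fin.last (N + 1))).2
  let g : Fin N → Fin N := fun i =>
    if h' : (τ i.succ.castSucc : ℕ) < τ 0 then ⟨τ i.succ.castSucc, by omega⟩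
    else ⟨τ i.succ.castSucc - 2, by
      have := ne0 i; have := ne1 i; have := (τ i.succ.castSucc).2; omega⟩
  have hg : ∀ i, (g i : ℕ) = if (τ i.succ.castSucc : ℕ) < τ 0 then (τ i.succ.castSucc : ℕ)
      else (τ i.succ.castSucc : ℕ) - 2 := by
    intro i; simp only [g]; split_ifs <;> rfl
  have hgi : Function.Injective g := by
    intro i j hij
    have hij' : (g i : ℕ) = g j := by rw [hij]
    rw [hg, hg] at hij'
    have a1 := ne0 i
    have a2 := ne1 i
    have a3 := ne0 j
    have a4 := ne1 j
    have : (τ i.succ.castSucc : ℕ) = τ j.succ.castSucc := by split_ifs at hij' <;> omega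
    have := congrArg Fin.val (τ.injective (Fin.ext this))
    simp at this
    exact Fin.ext this
  refine ⟨Equiv.ofBijective g (Finite.injective_iff_bijective.mp hgi), rfl, h, ?_⟩
  intro i
  have a1 := ne0 i
  have a2 := ne1 i
  simp only [Equiv.ofBijective_apply, hg]
  split_ifs <;> omega

theorem domRel_lt {N : ℕ} {ρ : Equiv.Perm (Fin N)} {m : ℕ} {τ : Equiv.Perm (Fin (N + 2))}
    (h : DomRel ρ m τ) (i j : Fin N) :
    τ i.succ.castSucc < τ j.succ.castSucc ↔ ρ i < ρ j := by
  rw [Fin.lt_def, Fin.lt_def, h.2.2, h.2.2]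
  split_ifs <;> omega

theorem avoids_symm {n : ℕ} (σ : Equiv.Perm (Fin n)) (h : Avoids1324 σ) :
    Avoids1324 σ.symm := by
  rintro ⟨i, j, k, l, h1, h2, h3, h4, h5, h6⟩
  exact h ⟨σ.symm i, σ.symm k, σ.symm j, σ.symm l, h4, h5, h6, by simpa using h1,
    by simpa using h2, by simpa using h3⟩

theorem domRel_avoids {N : ℕ} {ρ : Equiv.Perm (Fin N)} {m : ℕ} {τ : Equiv.Perm (Fin (N + 2))}
    (h : DomRel ρ m τ) : Avoids1324 τ ↔ (Avoids1324 ρ ∧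
      (¬ ∃ i j k : Fin N, i < j ∧ j < k ∧
        (ρ i : ℕ) < m ∧ (ρ j : ℕ) < m ∧ (ρ k : ℕ) < m ∧
        ρ i < ρ k ∧ ρ k < ρ j) ∧
      (¬ ∃ i j k : Fin N, i < j ∧ j < k ∧
        m ≤ (ρ i : ℕ) ∧ m ≤ (ρ j : ℕ) ∧ m ≤ (ρ k : ℕ) ∧
        ρ j < ρ i ∧ ρ i < ρ k)) := by
  have hlt := domRel_lt h
  obtain ⟨h0, h1, h2⟩ := h
  have pos : ∀ i j : Fin N, i.succ.castSucc < j.succ.castSucc ↔ i < j := by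
    intro i j; simp
  have c0 : ∀ i : Fin N, (0 : Fin (N + 2)) < i.succ.castSucc := by
    intro i; simp [Fin.lt_def]
  have cl : ∀ i : Fin N, i.succ.castSucc < Fin.last (N + 1) := by
    intro i; simp [Fin.lt_def]
  have v0 : ∀ i : Fin N, τ 0 < τ i.succ.castSucc ↔ m ≤ (ρ i : ℕ) := by
    intro i; rw [Fin.lt_def, h0, h2]; split_ifs <;> omega
  have vl : ∀ i : Fin N, τ i.succ.castSucc < τ (Fin.last (N + 1)) ↔ (ρ i : ℕ) < m := by
    intro i; rw [Fin.lt_def, h1, h2]; split_ifs <;> omega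
  constructor
  · intro H
    refine ⟨?_, ?_, ?_⟩
    · rintro ⟨i, j, k, l, a1, a2, a3, a4, a5, a6⟩
      exact H ⟨_, _, _, _, (pos i j).2 a1, (pos j k).2 a2, (pos k l).2 a3, (hlt _ _).2 a4,
        (hlt _ _).2 a5, (hlt _ _).2 a6⟩
    · rintro ⟨i, j, k, a1, a2, b1, b2, b3, a3, a4⟩
      exact H ⟨_, _, _, _, (pos i j).2 a1, (pos j k).2 a2, cl k, (hlt _ _).2 a3,
        (hlt _ _).2 a4, (vl _).2 b2⟩
    · rintro ⟨i, j, k, a1, a2, b1, b2, b3, a3, a4⟩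
      exact H ⟨_, _, _, _, c0 i, (pos i j).2 a1, (pos j k).2 a2, (v0 _).2 b2, (hlt _ _).2 a3,
        (hlt _ _).2 a4⟩
  · rintro ⟨H1, H2, H3⟩ ⟨a, b, c, d, a1, a2, a3, a4, a5, a6⟩
    have mid : ∀ x y z : Fin (N + 2), x < y → y < z → ∃ i : Fin N, y = i.succ.castSucc := by
      intro x y z hx hz
      rcases fin_cases3 y with rfl | rfl | h
      · exact absurd hx (by simp)
      · exact absurd hz (by simp [Fin.le_last])
      · exact h
    obtain ⟨j, rfl⟩ := mid _ _ _ a1 a2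
    obtain ⟨k, rfl⟩ := mid _ _ _ a2 a3
    have hjk := (pos _ _).1 a2
    have hkj := (hlt _ _).1 a5
    have hkj' : (ρ k : ℕ) < ρ j := hkj
    rcases fin_cases3 a with rfl | rfl | ⟨i, rfl⟩
    · have q := (v0 _).1 a4
      rcases fin_cases3 d with rfl | rfl | ⟨l, rfl⟩
      · exact absurd a3 (by simp)
      · have := (vl _).1 a6
        omega
      · have hl := (hlt _ _).1 a6
        have hl' : (ρ j : ℕ) < ρ l := hl
        exact H3 ⟨j, k, l, hjk, (pos _ _).1 a3, by omega, q, by omega, hkj, hl⟩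
    · exact absurd a1 (by simp [Fin.le_last])
    · have hi := (hlt _ _).1 a4
      have hi' : (ρ i : ℕ) < ρ k := hi
      rcases fin_cases3 d with rfl | rfl | ⟨l, rfl⟩
      · exact absurd a3 (by simp)
      · have := (vl _).1 a6
        exact H2 ⟨i, j, k, (pos _ _).1 a1, hjk, by omega, this, by omega, hi, hkj⟩
      · exact H1 ⟨i, j, k, l, (pos _ _).1 a1, hjk, (pos _ _).1 a3, hi, hkj, (hlt _ _).1 a6⟩

theorem domRel_unique_left {N : ℕ} {ρ ρ' : Equiv.Perm (Fin N)} {m m' : ℕ}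
    {τ : Equiv.Perm (Fin (N + 2))} (h : DomRel ρ m τ) (h' : DomRel ρ' m' τ) :
    ρ = ρ' ∧ m = m' := by
  have hm : m = m' := h.1.symm.trans h'.1
  subst hm
  refine ⟨?_, rfl⟩
  ext i
  have := (h.2.2 i).symm.trans (h'.2.2 i)
  split_ifs at this <;> omega

theorem domRel_unique_right {N : ℕ} {ρ : Equiv.Perm (Fin N)} {m : ℕ}
    {τ τ' : Equiv.Perm (Fin (N + 2))} (h : DomRel ρ m τ) (h' : DomRel ρ m τ') :
    τ = τ' := by
  ext x
  rcases fin_cases3 x with rfl | rfl | ⟨i, rfl⟩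
  · rw [h.1, h'.1]
  · rw [h.2.1, h'.2.1]
  · rw [h.2.2, h'.2.2]

/-- for `n ≥ 2`, the 1324-avoiding permutations of `{1,…,n}` with the `n`
immediately to the right of the `1` are equinumerous with 1324-avoiding vertical
dominoes with `n - 2` points, i.e. pairs `(ρ, m)` where `ρ` is a 1324-avoiding
permutation of `{1,…,n-2}`, `0 ≤ m ≤ n-2`, the entries of `ρ` with values `≤ m`
avoid 132, and the entries of `ρ` with values `> m` avoid 213. -/
theorem stmt_1 (n : ℕ) (hn : 2 ≤ n) :
    {σ : Equiv.Perm (Fin n) | Avoids1324 σ ∧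
      ((σ.symm ⟨n - 1, by omega⟩ : Fin n) : ℕ) =
        ((σ.symm ⟨0, by omega⟩ : Fin n) : ℕ) + 1}.ncard =
    {p : Equiv.Perm (Fin (n - 2)) × ℕ | p.2 ≤ n - 2 ∧ Avoids1324 p.1 ∧
      (¬ ∃ i j k : Fin (n - 2), i < j ∧ j < k ∧
        (p.1 i : ℕ) < p.2 ∧ (p.1 j : ℕ) < p.2 ∧ (p.1 k : ℕ) < p.2 ∧
        p.1 i < p.1 k ∧ p.1 k < p.1 j) ∧
      (¬ ∃ i j k : Fin (n - 2), i < j ∧ j < k ∧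
        p.2 ≤ (p.1 i : ℕ) ∧ p.2 ≤ (p.1 j : ℕ) ∧ p.2 ≤ (p.1 k : ℕ) ∧
        p.1 j < p.1 i ∧ p.1 i < p.1 k)}.ncard := by
  obtain ⟨N, rfl⟩ : ∃ N, n = N + 2 := ⟨n - 2, by omega⟩
  symm
  refine Set.ncard_congr (fun p hp => (domRel_ex p.1 p.2 hp.1).choose.symm) ?_ ?_ ?_
  · intro p hp
    have hR := (domRel_ex p.1 p.2 hp.1).choose_spec
    refine ⟨avoids_symm _ ((domRel_avoids hR).2 hp.2), ?_⟩
    exact hR.2.1.trans (congrArg (· + 1) hR.1.symm)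
  · intro p q hp hq hpq
    have hR := (domRel_ex p.1 p.2 hp.1).choose_spec
    have hR2 := (domRel_ex q.1 q.2 hq.1).choose_spec
    have e := Equiv.symm_bijective.injective hpq
    rw [← e] at hR2
    obtain ⟨h1, h2⟩ := domRel_unique_left hR hR2
    exact Prod.ext h1 h2
  · intro σ hσ
    obtain ⟨ρ, hρ⟩ := domRel_ex2 σ.symm hσ.2
    have hm : (σ.symm 0 : ℕ) ≤ N := by
      have := hρ.2.1
      have := (σ.symm (Fin.last (N + 1))).2
      omega
    refine ⟨(ρ, (σ.symm 0 : ℕ)), ⟨hm, (domRel_avoids hρ).1 (avoids_symm _ hσ.1)⟩, ?_⟩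
    have hR := (domRel_ex ρ (σ.symm 0 : ℕ) hm).choose_spec
    have := domRel_unique_right hR hρ
    simp only [this, Equiv.symm_symm]
end

section
/- For every n ≥ 2, let a_{n,1} denote the number of permutations σ of {1,…,n} avoiding 1324 with σ⁻¹(n) = σ⁻¹(1) + 1. Then n! · (2n−1)! · a_{n,1} = 2 · (3n−3)!. -/
/-- The set `S_{n,k}^{a ≺ n}(1324)`: 1324-avoiding permutations with the entry `a`
exactly `k` places to the left of the entry `n`, and the entries `1, …, a-1` all to
the right of `n`.  (Values are 0-based: the entry `a` is `⟨a-1, _⟩`.) -/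
def SPerm (n a k : ℕ) : Set (Equiv.Perm (Fin n)) :=
  {σ | Avoids1324 σ ∧ ∃ hn : n - 1 < n, ∃ ha : a - 1 < n,
    ((σ.symm ⟨n - 1, hn⟩ : Fin n) : ℕ) = ((σ.symm ⟨a - 1, ha⟩ : Fin n) : ℕ) + k ∧
    ∀ b : Fin n, (b : ℕ) + 1 < a → σ.symm ⟨n - 1, hn⟩ < σ.symm b}



namespace Dom

/-! ### Path counting -/

def psum {α : Type*} {β : Type*} [Add α] [AddCommMonoid β] (F : List α → β) : List α → β
  | [] => 0
  | [p] => F [p]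
  | p :: q :: r => F (p :: q :: r) + psum F ((p + q) :: r)
termination_by l => l.length

def cutsum (F : List ℕ → ℕ) : List ℕ → ℕ
  | [] => 0
  | l :: r => (∑ h ∈ Finset.range l, F ((h + 1) :: r)) + cutsum F r

def pushTop : List ℕ → List ℕ
  | [] => []
  | l :: r => (l + 1) :: r

def topcut (F : List ℕ → ℕ) : List ℕ → ℕ
  | [] => 0
  | l :: r => ∑ h ∈ Finset.range l, F ((h + 1) :: r)

def fcount : ℕ → List ℕ → ℕ
  | 0, _ => 1
  | N + 1, s => fcount N (pushTop s) + cutsum (fcount N) s + psum (fun s => fcount N (0 :: s)) s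

def gcount : ℕ → List ℕ → ℕ
  | 0, s => if s.length = 1 then 1 else 0
  | N + 1, s => gcount N (pushTop s) + gcount N (0 :: s) + topcut (gcount N) s + psum (gcount N) s

theorem psum_add {α β : Type*} [Add α] [AddCommMonoid β] (F G : List α → β) (s : List α) :
    psum (fun s => F s + G s) s = psum F s + psum G s := by
  induction h : s.length generalizing s with
  | zero => simp [List.length_eq_zero_iff.1 h, psum]
  | succ n ih =>
    match s, h with
    | [p], _ => simp [psum]
    | p :: q :: r, h =>
      rw [psum, psum, psum, ih _ (by simpa using h)]
      abel

theorem psum_congr {α β : Type*} [Add α] [AddCommMonoid β] (F G : List α → β) (s : List α)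
    (hFG : ∀ s, s ≠ [] → F s = G s) :
    psum F s = psum G s := by
  induction h : s.length generalizing s with
  | zero => simp [List.length_eq_zero_iff.1 h, psum]
  | succ n ih =>
    match s, h with
    | [p], _ => simp [psum, hFG]
    | p :: q :: r, h =>
      rw [psum, psum, ih _ (by simpa using h), hFG _ (by simp)]

theorem psum_push (F : List ℕ → ℕ) (s : List ℕ) :
    psum F (pushTop s) = psum (fun s => F (pushTop s)) s := by
  induction h : s.length generalizing s with
  | zero => simp [List.length_eq_zero_iff.1 h, psum, pushTop]
  | succ n ih =>
    match s, h with
    | [p], _ => simp [psum, pushTop]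
    | p :: q :: r, h =>
      have := ih ((p + q) :: r) (by simpa using h)
      simp only [pushTop, psum] at this ⊢
      rw [← this, show p + 1 + q = p + q + 1 by ring]

theorem cutsum_psum (F : List ℕ → ℕ) (s : List ℕ) :
    cutsum (psum F) s = psum (topcut F) s := by
  induction h : s.length generalizing s with
  | zero => simp [List.length_eq_zero_iff.1 h, psum, cutsum]
  | succ n ih =>
    match s, h with
    | [p], _ => simp [psum, cutsum, topcut]
    | p :: q :: r, h =>
      have := ih ((p + q) :: r) (by simpa using h)
      simp only [cutsum, psum, topcut] at this ⊢
      rw [← this, Finset.sum_add_distrib, add_comm p q, Finset.sum_range_add]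
      have e : ∀ x ∈ Finset.range p, psum F ((x + 1 + q) :: r) = psum F ((q + x + 1) :: r) := by
        intro x _
        congr 2; ring
      rw [Finset.sum_congr rfl e]
      ring

theorem f_eq_psum_g (N : ℕ) (s : List ℕ) (hs : s ≠ []) : fcount N s = psum (gcount N) s := by
  induction N generalizing s with
  | zero =>
    have : ∀ s : List ℕ, s ≠ [] → psum (gcount 0) s = 1 := by
      intro s hs
      induction h : s.length generalizing s with
      | zero => simp [List.length_eq_zero_iff.1 h] at hs
      | succ n ih =>
        match s, h with
        | [p], _ => simp [psum, gcount]
        | p :: q :: r, h =>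
          rw [psum, ih _ (by simp) (by simpa using h)]
          simp [gcount]
    rw [this s hs]; rfl
  | succ N ih =>
    have h1 : gcount (N+1) = fun s => gcount N (pushTop s) + gcount N (0 :: s) +
        topcut (gcount N) s + psum (gcount N) s := by
      funext s; rfl
    have hp : pushTop s ≠ [] := by
      cases s with
      | nil => exact absurd rfl hs
      | cons a b => simp [pushTop]
    rw [h1, psum_add, psum_add, psum_add, fcount, ih _ hp, psum_push, ← cutsum_psum]
    have h2 : ∀ s, s ≠ [] → fcount N (0 :: s) = gcount N (0 :: s) + psum (gcount N) s := by
      intro s hs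
      rw [ih _ (by simp)]
      cases s with
      | nil => exact absurd rfl hs
      | cons a b => rw [psum, zero_add]
    rw [psum_congr _ _ s h2, psum_add]
    have h3 : cutsum (fcount N) s = cutsum (psum (gcount N)) s := by
      clear hp hs
      induction s with
      | nil => rfl
      | cons a b ihb =>
        rw [cutsum, cutsum, ihb]
        congr 1
        exact Finset.sum_congr rfl fun x _ => ih _ (by simp)
    rw [h3]; ring

end Dom

namespace Dom

/-! ### Multilinear extension -/

section ML

variable {R S : Type*} [CommRing R] [CommRing S]

def pmul (F : List R → S) : List R → S
  | [] => 0
  | [p] => F [p]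
  | p :: q :: r => F (p :: q :: r) + pmul F ((p * q) :: r)
termination_by l => l.length

structure IsML (tR : R) (tS : S) (F : List R → S) : Prop where
  add : ∀ l r p q, F (l ++ (p + q) :: r) = F (l ++ p :: r) + F (l ++ q :: r)
  smul : ∀ l r p, F (l ++ (tR * p) :: r) = tS * F (l ++ p :: r)

theorem pmul_isML {tR : R} {tS : S} {F : List R → S} (hF : IsML tR tS F) :
    IsML tR tS (pmul F) := by
  have h0a : ∀ (r : List R) (p q : R), pmul F ((p + q) :: r) = pmul F (p :: r) + pmul F (q :: r) := by
    intro r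
    induction r with
    | nil => intro p q; simpa [pmul] using hF.add [] [] p q
    | cons a r ih =>
      intro p q
      simp only [pmul, add_mul, ih]
      have := hF.add [] (a :: r) p q
      simp only [List.nil_append] at this
      rw [this]; ring
  have h0s : ∀ (r : List R) (p : R), pmul F ((tR * p) :: r) = tS * pmul F (p :: r) := by
    intro r
    induction r with
    | nil => intro p; simpa [pmul] using hF.smul [] [] p
    | cons a r ih =>
      intro p
      simp only [pmul, mul_assoc, ih]
      have := hF.smul [] (a :: r) p
      simp only [List.nil_append] at this
      rw [this]; ring
  constructor
  · intro l r p q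
    induction h : l.length generalizing l with
    | zero => simp [List.length_eq_zero_iff.1 h, h0a]
    | succ n ih =>
      match l, h with
      | [a], _ =>
        have := hF.add [a] r p q
        simp only [List.singleton_append] at this
        simp only [List.singleton_append, pmul, mul_add, h0a, this]; ring
      | a :: b :: l, h =>
        have := hF.add (a :: b :: l) r p q
        have h2 := ih ((a * b) :: l) (by simpa using h)
        simp only [List.cons_append] at this h2
        simp only [List.cons_append, pmul, h2, this]; ring
  · intro l r p
    induction h : l.length generalizing l with
    | zero => simp [List.length_eq_zero_iff.1 h, h0s]
    | succ n ih =>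
      match l, h with
      | [a], _ =>
        have := hF.smul [a] r p
        simp only [List.singleton_append] at this
        simp only [List.singleton_append, pmul, mul_left_comm a, h0s, this]; ring
      | a :: b :: l, h =>
        have := hF.smul (a :: b :: l) r p
        have h2 := ih ((a * b) :: l) (by simpa using h)
        simp only [List.cons_append] at this h2
        simp only [List.cons_append, pmul, h2, this]; ring

def gh (ε : R →+ S) (u : R) (c : R →+ R) : ℕ → List R → S
  | 0, [p] => ε p
  | 0, _ => 0
  | _ + 1, [] => 0
  | N + 1, p :: r => gh ε u c N ((u * p) :: r) + gh ε u c N (1 :: p :: r) + gh ε u c N (c p :: r)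
      + pmul (gh ε u c N) (p :: r)

variable (tR : R) (tS : S) (ε : R →+ S) (u : R) (c : R →+ R)

theorem gh_isML (hε : ∀ p, ε (tR * p) = tS * ε p) (hc : ∀ p, c (tR * p) = tR * c p) (N : ℕ) :
    IsML tR tS (gh ε u c N) := by
  induction N with
  | zero =>
    constructor
    · intro l r p q
      match l, r with
      | [], [] => simp [gh]
      | [], a :: r => simp [gh]
      | [a], r => simp [gh]
      | a :: b :: l, r => simp [gh]
    · intro l r p
      match l, r with
      | [], [] => simp [gh, hε]
      | [], a :: r => simp [gh]
      | [a], r => simp [gh]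
      | a :: b :: l, r => simp [gh]
  | succ N ih =>
    have hp := pmul_isML ih
    constructor
    · intro l r p q
      match l with
      | [] =>
        have h1 := ih.add [] r (u * p) (u * q)
        have h2 := ih.add [1] r p q
        have h3 := ih.add [] r (c p) (c q)
        have h4 := hp.add [] r p q
        simp only [List.nil_append, List.singleton_append] at h1 h2 h3 h4
        simp only [List.nil_append, gh, mul_add, map_add, h1, h2, h3, h4]; ring
      | a :: l =>
        have h1 := ih.add ((u * a) :: l) r p q
        have h2 := ih.add (1 :: a :: l) r p q
        have h3 := ih.add (c a :: l) r p q
        have h4 := hp.add (a :: l) r p q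
        simp only [List.cons_append] at h1 h2 h3 h4
        simp only [List.cons_append, gh, h1, h2, h3, h4]; ring
    · intro l r p
      match l with
      | [] =>
        have h1 := ih.smul [] r (u * p)
        have h2 := ih.smul [1] r p
        have h3 := ih.smul [] r (c p)
        have h4 := hp.smul [] r p
        simp only [List.nil_append, List.singleton_append] at h1 h2 h3 h4
        simp only [List.nil_append, gh, mul_left_comm u, hc, h1, h2, h3, h4]; ring
      | a :: l =>
        have h1 := ih.smul ((u * a) :: l) r p
        have h2 := ih.smul (1 :: a :: l) r p
        have h3 := ih.smul (c a :: l) r p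
        have h4 := hp.smul (a :: l) r p
        simp only [List.cons_append] at h1 h2 h3 h4
        simp only [List.cons_append, gh, h1, h2, h3, h4]; ring

theorem gh_mono (hε : ∀ l : ℕ, ε (u ^ l) = 1)
    (hc : ∀ l : ℕ, c (u ^ l) = ∑ h ∈ Finset.range l, u ^ (h + 1))
    (hlin : ∀ N, IsML tR tS (gh ε u c N)) (N : ℕ) (s : List ℕ) (hs : s ≠ []) :
    gh ε u c N (s.map (u ^ ·)) = (gcount N s : S) := by
  induction N generalizing s with
  | zero =>
    match s, hs with
    | [a], _ => simp [gh, gcount, hε]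
    | a :: b :: l, _ => simp [gh, gcount]
  | succ N ih =>
    have hp : ∀ s : List ℕ, pmul (gh ε u c N) (s.map (u ^ ·)) = (psum (gcount N) s : ℕ) := by
      intro s
      induction h : s.length generalizing s with
      | zero => simp [List.length_eq_zero_iff.1 h, psum, pmul]
      | succ n ih2 =>
        match s, h with
        | [p], _ =>
          have := ih [p] (by simp)
          simp only [List.map_cons, List.map_nil] at this ⊢
          simp only [pmul, psum, this]
        | p :: q :: r, h =>
          have h1 := ih2 ((p + q) :: r) (by simpa using h)
          have h2 := ih (p :: q :: r) (by simp)
          simp only [List.map_cons, pow_add] at h1 h2 ⊢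
          simp only [pmul, psum, h1, h2]; push_cast; rfl
    match s, hs with
    | a :: l, _ =>
      have h1 := ih ((a + 1) :: l) (by simp)
      have h2 := ih (0 :: a :: l) (by simp)
      have h4 := hp (a :: l)
      have h3 : gh ε u c N (c (u ^ a) :: l.map (u ^ ·)) = (topcut (gcount N) (a :: l) : ℕ) := by
        rw [hc, topcut]
        have h0 : ∀ r, gh ε u c N (0 :: r) = 0 := by
          intro r
          have := (hlin N).add [] r 0 0
          simpa using this
        induction a with
        | zero => simp [h0]
        | succ k ihk =>
          have h5 := (hlin N).add [] (l.map (u ^ ·)) (∑ h ∈ Finset.range k, u ^ (h + 1)) (u ^ (k + 1))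
          simp only [List.nil_append] at h5
          have h6 := ih ((k + 1) :: l) (by simp)
          simp only [List.map_cons] at h6
          rw [Finset.sum_range_succ, h5, h6,
            ihk (by simp) (ih _ (by simp)) (ih _ (by simp)) (hp _), Finset.sum_range_succ]
          push_cast; rfl
      simp only [List.map_cons, pow_succ, pow_zero] at h1 h2 h3 h4 ⊢
      simp only [gh, gcount, pushTop]
      rw [mul_comm u, h1, h2, h3, h4]; push_cast; rfl

theorem pmul_rep (F : List R → S) (P : R) (k s : ℕ) :
    pmul F (P ^ (s + 1) :: List.replicate k P) =
      ∑ i ∈ Finset.range (k + 1), F (P ^ (s + 1 + (k - i)) :: List.replicate i P) := by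
  induction k generalizing s with
  | zero => simp [pmul]
  | succ k ih =>
    rw [List.replicate_succ, pmul, ← pow_succ, ih, Finset.sum_range_succ _ (k + 1), add_comm]
    congr 1
    · refine Finset.sum_congr rfl fun i hi => ?_
      have : i ≤ k := by simpa [Nat.lt_succ_iff] using hi
      rw [show s + 1 + 1 + (k - i) = s + 1 + (k + 1 - i) by omega]
    · simp [List.replicate_succ]

def Tsum (P : R) (K N : ℕ) : S :=
  ∑ k ∈ Finset.range K, tS ^ k * gh ε u c N (P :: List.replicate k P)

theorem T_step (hlin : ∀ N, IsML tR tS (gh ε u c N)) (P Q : R)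
    (hP : P = 1 + tR * (u * P) + tR * c P + Q) (hQ : Q = tR * P + tR * (P * Q)) (K N : ℕ) :
    tS ^ K ∣ Tsum tS ε u c P K N - gh ε u c N [1] - tS * Tsum tS ε u c P K (N + 1) := by
  set F := gh ε u c N with hFdef
  have hF := hlin N
  rw [← hFdef] at hF
  have hadd : ∀ p q r, F ((p + q) :: r) = F (p :: r) + F (q :: r) := fun p q r => hF.add [] r p q
  have hsm : ∀ p r, F ((tR * p) :: r) = tS * F (p :: r) := fun p r => hF.smul [] r p
  have e1 : ∀ r, F (P :: r) = F (1 :: r) + tS * F ((u * P) :: r) + tS * F (c P :: r) + F (Q :: r) := by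
    intro r
    conv_lhs => rw [hP]
    rw [hadd, hadd, hadd, hsm, hsm]
  have e2 : ∀ r J, F (Q :: r) = ∑ j ∈ Finset.range J, tS ^ (j + 1) * F (P ^ (j + 1) :: r)
      + tS ^ J * F ((P ^ J * Q) :: r) := by
    intro r J
    induction J with
    | zero => simp
    | succ J ih =>
      rw [ih, Finset.sum_range_succ]
      have : P ^ J * Q = tR * P ^ (J + 1) + tR * (P ^ (J + 1) * Q) := by
        conv_lhs => rw [hQ]
        ring
      rw [this, hadd, hsm, hsm]; ring
  have e3 : ∀ k, gh ε u c (N + 1) (P :: List.replicate k P) =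
      F ((u * P) :: List.replicate k P) + F (1 :: List.replicate (k + 1) P)
      + F (c P :: List.replicate k P)
      + ∑ i ∈ Finset.range (k + 1), F (P ^ (k - i + 1) :: List.replicate i P) := by
    intro k
    have := pmul_rep F P k 0
    simp only [zero_add, pow_one] at this
    rw [gh, ← hFdef, this]
    simp only [List.replicate_succ]
    congr 1
    refine Finset.sum_congr rfl fun i _ => by rw [add_comm]
  have e4 : ∑ k ∈ Finset.range K, ∑ i ∈ Finset.range (k + 1),
        tS ^ (i + (k - i) + 1) * F (P ^ (k - i + 1) :: List.replicate i P) =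
      ∑ i ∈ Finset.range K, ∑ j ∈ Finset.range (K - i),
        tS ^ (i + j + 1) * F (P ^ (j + 1) :: List.replicate i P) :=
    Finset.sum_range_diag_flip K
      (fun i j => tS ^ (i + j + 1) * F (P ^ (j + 1) :: List.replicate i P))
  have e5 : tS * Tsum tS ε u c P K (N + 1) =
      ∑ k ∈ Finset.range K, tS ^ (k + 1) * F ((u * P) :: List.replicate k P) +
      ∑ k ∈ Finset.range K, tS ^ (k + 1) * F (1 :: List.replicate (k + 1) P) +
      ∑ k ∈ Finset.range K, tS ^ (k + 1) * F (c P :: List.replicate k P) +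
      ∑ i ∈ Finset.range K, ∑ j ∈ Finset.range (K - i),
        tS ^ (i + j + 1) * F (P ^ (j + 1) :: List.replicate i P) := by
    rw [← e4, Tsum, Finset.mul_sum, ← Finset.sum_add_distrib, ← Finset.sum_add_distrib,
      ← Finset.sum_add_distrib]
    refine Finset.sum_congr rfl fun k _ => ?_
    have : ∑ i ∈ Finset.range (k + 1),
        tS ^ (i + (k - i) + 1) * F (P ^ (k - i + 1) :: List.replicate i P) =
        tS ^ (k + 1) * ∑ i ∈ Finset.range (k + 1), F (P ^ (k - i + 1) :: List.replicate i P) := by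
      rw [Finset.mul_sum]
      refine Finset.sum_congr rfl fun i hi => ?_
      have : i ≤ k := by simpa [Nat.lt_succ_iff] using hi
      rw [show i + (k - i) + 1 = k + 1 by omega]
    rw [this, e3]; ring
  have e6 : Tsum tS ε u c P K N =
      ∑ k ∈ Finset.range K, tS ^ k * F (1 :: List.replicate k P) +
      ∑ k ∈ Finset.range K, tS ^ (k + 1) * F ((u * P) :: List.replicate k P) +
      ∑ k ∈ Finset.range K, tS ^ (k + 1) * F (c P :: List.replicate k P) +
      ∑ i ∈ Finset.range K, ∑ j ∈ Finset.range (K - i),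
        tS ^ (i + j + 1) * F (P ^ (j + 1) :: List.replicate i P) +
      tS ^ K * ∑ i ∈ Finset.range K, F ((P ^ (K - i) * Q) :: List.replicate i P) := by
    rw [Tsum, Finset.mul_sum, ← Finset.sum_add_distrib, ← Finset.sum_add_distrib,
      ← Finset.sum_add_distrib, ← Finset.sum_add_distrib]
    refine Finset.sum_congr rfl fun i hi => ?_
    have hi' : i < K := by simpa using hi
    rw [← hFdef, e1, e2 _ (K - i)]
    have : tS ^ K = tS ^ i * tS ^ (K - i) := by rw [← pow_add]; congr 1; omega
    rw [this]
    have h7 : ∑ j ∈ Finset.range (K - i), tS ^ (i + j + 1) * F (P ^ (j + 1) :: List.replicate i P)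
       = tS ^ i * ∑ j ∈ Finset.range (K - i), tS ^ (j + 1) * F (P ^ (j + 1) :: List.replicate i P) := by
      rw [Finset.mul_sum]
      refine Finset.sum_congr rfl fun j _ => ?_
      ring
    rw [h7]; ring
  have e7 := Finset.sum_range_succ' (fun k => tS ^ k * F (1 :: List.replicate k P)) K
  rw [Finset.sum_range_succ] at e7
  simp only [pow_zero, one_mul, List.replicate_zero] at e7
  refine ⟨∑ i ∈ Finset.range K, F ((P ^ (K - i) * Q) :: List.replicate i P)
    - F (1 :: List.replicate K P), ?_⟩
  rw [e5, e6]
  linear_combination e7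

end ML

end Dom

namespace Dom

/-! ### Power series -/

open PowerSeries in
theorem exists_fixed {A : Type*} [CommRing A] (Φ : PowerSeries A → PowerSeries A)
    (h : ∀ p q n, (X : PowerSeries A) ^ n ∣ p - q → (X : PowerSeries A) ^ (n + 1) ∣ Φ p - Φ q) :
    ∃ p, Φ p = p := by
  set s : ℕ → PowerSeries A := fun k => Φ^[k] 0 with hs
  have hsucc : ∀ k, s (k + 1) = Φ (s k) := fun k => Function.iterate_succ_apply' Φ k 0
  have h1 : ∀ k, (X : PowerSeries A) ^ k ∣ s (k + 1) - s k := by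
    intro k
    induction k with
    | zero => simp
    | succ k ih => rw [hsucc (k + 1)]; nth_rewrite 2 [hsucc k]; exact h _ _ _ ih
  have h2 : ∀ k j, (X : PowerSeries A) ^ k ∣ s (k + j) - s k := by
    intro k j
    induction j with
    | zero => simp
    | succ j ih =>
      have := dvd_add ((pow_dvd_pow X (Nat.le_add_right k j)).trans (h1 (k + j))) ih
      simpa [add_assoc] using this
  set p : PowerSeries A := mk fun n => coeff n (s (n + 1)) with hp
  have h3 : ∀ k, (X : PowerSeries A) ^ k ∣ p - s k := by
    intro k
    rw [X_pow_dvd_iff]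
    intro n hn
    obtain ⟨j, rfl⟩ := Nat.exists_eq_add_of_le (Nat.succ_le_of_lt hn)
    have := (X_pow_dvd_iff.1 (h2 (n + 1) j)) n (Nat.lt_succ_self n)
    rw [map_sub, sub_eq_zero] at this
    rw [map_sub, hp, coeff_mk, sub_eq_zero, Nat.succ_eq_add_one, this]
  refine ⟨p, ?_⟩
  rw [← sub_eq_zero]
  ext n
  have h4 := h _ _ _ (h3 (n + 1))
  rw [← hsucc] at h4
  have h5 := dvd_sub h4 (h3 (n + 2))
  have := X_pow_dvd_iff.1 h5 n (by omega)
  simpa using this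

noncomputable def cmap {A B : Type*} [Semiring A] [Semiring B] (f : A →+ B) : PowerSeries A →+ PowerSeries B where
  toFun p := PowerSeries.mk fun n => f (PowerSeries.coeff n p)
  map_zero' := by ext; simp
  map_add' := by intros; ext; simp

theorem coeff_cmap {A B : Type*} [Semiring A] [Semiring B] (f : A →+ B) (p : PowerSeries A) (n : ℕ) :
    PowerSeries.coeff n (cmap f p) = f (PowerSeries.coeff n p) := by
  simp [cmap]

theorem cmap_X {A B : Type*} [Semiring A] [Semiring B] (f : A →+ B) (p : PowerSeries A) :
    cmap f (PowerSeries.X * p) = PowerSeries.X * cmap f p := by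
  ext n
  cases n with
  | zero => simp [coeff_cmap]
  | succ n => simp [coeff_cmap, PowerSeries.coeff_succ_X_mul]

theorem cmap_C {A B : Type*} [Semiring A] [Semiring B] (f : A →+ B) (a : A) :
    cmap f (PowerSeries.C a) = PowerSeries.C (f a) := by
  ext n
  by_cases h : n = 0 <;> simp [coeff_cmap, PowerSeries.coeff_C, h]

theorem cmap_X_pow_dvd {A B : Type*} [CommRing A] [CommRing B] (f : A →+ B) (p : PowerSeries A) (n : ℕ)
    (h : PowerSeries.X ^ n ∣ p) : PowerSeries.X ^ n ∣ cmap f p := by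
  rw [PowerSeries.X_pow_dvd_iff] at h ⊢
  intro m hm
  rw [coeff_cmap, h m hm, map_zero]

noncomputable def c0 : Polynomial ℚ →+ Polynomial ℚ :=
  (Polynomial.lsum (R := ℚ) (A := ℚ) (M := Polynomial ℚ) fun n => LinearMap.toSpanSingleton ℚ (Polynomial ℚ)
    (∑ h ∈ Finset.range n, Polynomial.X ^ (h + 1))).toAddMonoidHom

theorem c0_monomial (n : ℕ) (a : ℚ) :
    c0 (Polynomial.monomial n a) = a • ∑ h ∈ Finset.range n, Polynomial.X ^ (h + 1) := by
  simp [c0, Polynomial.sum_monomial_index]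

theorem c0_X_pow (n : ℕ) :
    c0 (Polynomial.X ^ n) = ∑ h ∈ Finset.range n, Polynomial.X ^ (h + 1) := by
  rw [← Polynomial.monomial_one_right_eq_X_pow, c0_monomial, one_smul]

theorem c0_spec (p : Polynomial ℚ) :
    (1 - Polynomial.X) * c0 p = Polynomial.X * (Polynomial.C (p.eval 1) - p) := by
  induction p using Polynomial.induction_on' with
  | add p q hp hq => rw [map_add, mul_add, hp, hq, Polynomial.eval_add, map_add]; ring
  | monomial n a =>
    rw [c0_monomial, Polynomial.eval_monomial, one_pow, mul_one, ← Polynomial.C_mul_X_pow_eq_monomial,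
      Polynomial.smul_eq_C_mul]
    have : (1 - Polynomial.X) * ∑ h ∈ Finset.range n, (Polynomial.X : Polynomial ℚ) ^ (h + 1) =
        Polynomial.X * (1 - Polynomial.X ^ n) := by
      induction n with
      | zero => simp
      | succ n ih => rw [Finset.sum_range_succ, mul_add, ih]; ring
    linear_combination Polynomial.C a * this

abbrev RR := PowerSeries (Polynomial ℚ)
abbrev SS := PowerSeries ℚ

noncomputable def uu : RR := PowerSeries.C Polynomial.X
noncomputable def ev : RR →+* SS := PowerSeries.map (Polynomial.evalRingHom 1)
noncomputable def emb : SS →+* RR := PowerSeries.map Polynomial.C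
noncomputable def cc : RR →+ RR := cmap c0

theorem cc_spec (p : RR) : (1 - uu) * cc p = uu * (emb (ev p) - p) := by
  ext1 n
  have h : (1 - uu : RR) = PowerSeries.C (1 - Polynomial.X) := by simp [uu]
  rw [h, uu, PowerSeries.coeff_C_mul, PowerSeries.coeff_C_mul, cc, coeff_cmap, c0_spec]
  simp [emb, ev]

theorem exists_PQ : ∃ P Q : RR, P = 1 + PowerSeries.X * (uu * P) + PowerSeries.X * cc P + Q ∧
    Q = PowerSeries.X * P + PowerSeries.X * (P * Q) := by
  set I : RR → RR := fun P => PowerSeries.invOfUnit (1 - PowerSeries.X * P) 1 with hI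
  have hI1 : ∀ P, (1 - PowerSeries.X * P) * I P = 1 := by
    intro P
    exact PowerSeries.mul_invOfUnit _ _ (by simp)
  obtain ⟨P, hP⟩ := exists_fixed (fun P : RR => 1 + PowerSeries.X * (uu * P) + PowerSeries.X * cc P
      + PowerSeries.X * (P * I P)) (by
    intro p q n h
    have h2 : PowerSeries.X ^ n ∣ cc p - cc q := by
      rw [← map_sub]; exact cmap_X_pow_dvd _ _ _ h
    have h3 : I p - I q = PowerSeries.X * I p * I q * (p - q) := by
      linear_combination (I q) * hI1 p - I p * hI1 q
    have h4 : PowerSeries.X ^ n ∣ p * I p - q * I q := by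
      have : p * I p - q * I q = (p - q) * (I p + q * PowerSeries.X * I p * I q) := by
        linear_combination q * h3
      rw [this]; exact Dvd.dvd.mul_right h _
    have h5 := ((h.mul_left uu).add h2).add h4
    have h6 := mul_dvd_mul_left (PowerSeries.X : RR) h5
    rw [← pow_succ'] at h6
    refine h6.trans (dvd_of_eq ?_)
    ring)
  refine ⟨P, PowerSeries.X * (P * I P), hP.symm, ?_⟩
  linear_combination (PowerSeries.X * P) * hI1 P

theorem ev_X_mul (p : RR) : ev (PowerSeries.X * p) = PowerSeries.X * ev p := by
  simp [ev]

theorem coeff_ev_P (P Q : RR) (hP : P = 1 + PowerSeries.X * (uu * P) + PowerSeries.X * cc P + Q)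
    (hQ : Q = PowerSeries.X * P + PowerSeries.X * (P * Q)) (N : ℕ) :
    PowerSeries.coeff N (ev P) = fcount N [0] := by
  have hlin := gh_isML (PowerSeries.X : RR) (PowerSeries.X : SS) (ev : RR →+ SS) uu cc
    ev_X_mul (cmap_X c0)
  have hm := gh_mono (PowerSeries.X : RR) (PowerSeries.X : SS) (ev : RR →+ SS) uu cc
    (by intro l; simp [ev, uu]) (by
      intro l
      rw [uu, ← map_pow, cc, cmap_C, c0_X_pow, map_sum]; simp) hlin
  have hT := T_step _ _ _ _ _ hlin P Q hP hQ
  set T := Tsum (PowerSeries.X : SS) (ev : RR →+ SS) uu cc P with hTdef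
  have hT0 : ∀ K, T (K + 1) 0 = ev P := by
    intro K
    rw [hTdef, Tsum, Finset.sum_range_succ', Finset.sum_eq_zero]
    · simp [gh]
    · intro k _
      simp [gh, List.replicate_succ]
  have h1 : ∀ K M, (PowerSeries.X : SS) ^ K ∣ T K 0 -
      ∑ i ∈ Finset.range M, PowerSeries.X ^ i * (gcount i [0] : SS) - PowerSeries.X ^ M * T K M := by
    intro K M
    induction M with
    | zero => simp
    | succ M ih =>
      have h2 := hT K M
      have h3 := hm M [0] (by simp)
      simp only [List.map_cons, List.map_nil, pow_zero] at h3
      rw [h3] at h2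
      refine (ih.add (h2.mul_left (PowerSeries.X ^ M))).trans (dvd_of_eq ?_)
      rw [Finset.sum_range_succ]; ring
  have h2 := PowerSeries.X_pow_dvd_iff.1 (h1 (N + 1) (N + 1)) N (by omega)
  rw [hT0] at h2
  have h3 : PowerSeries.coeff N ((PowerSeries.X : SS) ^ (N + 1) * T (N + 1) (N + 1)) = 0 := by
    rw [PowerSeries.coeff_X_pow_mul', if_neg (by omega)]
  rw [map_sub, map_sub, h3, sub_zero, sub_eq_zero] at h2
  rw [h2, map_sum, Finset.sum_range_succ, Finset.sum_eq_zero, f_eq_psum_g _ _ (by simp)]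
  · rw [PowerSeries.coeff_X_pow_mul']
    simp [psum]
  · intro i hi
    have : i < N := by simpa using hi
    rw [PowerSeries.coeff_X_pow_mul', if_pos this.le]
    rw [← map_natCast (PowerSeries.C (R := ℚ)), PowerSeries.coeff_C, if_neg (by omega)]

end Dom

namespace Dom

/-! ### Solving the functional equation -/

theorem exists_A : ∃ A : SS, A = 1 + PowerSeries.X * A ^ 3 := by
  obtain ⟨A, hA⟩ := exists_fixed (fun A : SS => 1 + PowerSeries.X * A ^ 3) (by
    intro p q n h
    have h2 : PowerSeries.X ^ n ∣ p ^ 3 - q ^ 3 := h.trans (sub_dvd_pow_sub_pow p q 3)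
    have h6 := mul_dvd_mul_left (PowerSeries.X : SS) h2
    rw [← pow_succ'] at h6
    refine h6.trans (dvd_of_eq ?_)
    ring)
  exact ⟨A, hA.symm⟩

noncomputable def dd : RR →+ RR := cmap (Polynomial.derivative (R := ℚ)).toAddMonoidHom

theorem dd_mul (p q : RR) : dd (p * q) = dd p * q + p * dd q := by
  ext1 n
  rw [dd, map_add, coeff_cmap, PowerSeries.coeff_mul, PowerSeries.coeff_mul, PowerSeries.coeff_mul,
    map_sum, ← Finset.sum_add_distrib]
  refine Finset.sum_congr rfl fun i _ => ?_
  simp [coeff_cmap]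

theorem dd_X_mul (p : RR) : dd (PowerSeries.X * p) = PowerSeries.X * dd p := cmap_X _ _
theorem dd_uu : dd uu = 1 := by rw [dd, uu, cmap_C]; simp
theorem dd_one : dd 1 = 0 := by rw [dd, ← map_one (PowerSeries.C (R := Polynomial ℚ)), cmap_C]; simp
theorem dd_emb (s : SS) : dd (emb s) = 0 := by
  ext1 n
  rw [dd, coeff_cmap]; simp [emb]
theorem emb_X : emb PowerSeries.X = PowerSeries.X := by simp [emb]

theorem isUnit_one_add (r : RR) : IsUnit (1 + PowerSeries.X * r) := by
  rw [PowerSeries.isUnit_iff_constantCoeff]; simp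

theorem key (P Q : RR) (A : SS) (hA : A = 1 + PowerSeries.X * A ^ 3)
    (hP : P = 1 + PowerSeries.X * (uu * P) + PowerSeries.X * cc P + Q)
    (hQ : Q = PowerSeries.X * P + PowerSeries.X * (P * Q)) :
    PowerSeries.X * ev P = (1 - A) * (A - 2) := by
  set t : RR := PowerSeries.X with ht
  set Y : RR := 1 - t * P with hY
  set K : RR := 1 - uu + t * uu ^ 2 with hK
  set G : RR := t ^ 2 * emb (ev P) with hG
  have hQY : (1 + Q) * Y = 1 := by rw [hY]; linear_combination hQ
  have hc := cc_spec P
  -- the quadratic equation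
  have E0 : K * Y ^ 2 - (K - G * uu) * Y + t * (1 - uu) = 0 := by
    have h1 : P * (1 - uu) = (1 - uu) + t * uu * (1 - uu) * P + t * (uu * (emb (ev P) - P))
        + (1 - uu) * Q := by
      linear_combination (1 - uu) * hP + t * hc
    have h2 : Y * P * (1 - uu) = t * uu * (1 - uu) * P * Y + t * (uu * (emb (ev P) - P)) * Y
        + (1 - uu) := by
      linear_combination Y * h1 + (1 - uu) * hQY
    rw [hK, hG]
    have h3 : t * P = 1 - Y := by rw [hY]; ring
    linear_combination (-t) * h2 +
      (Y * (1 - uu) - t * uu * (1 - uu) * Y + t * uu * Y) * h3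
  set W : RR := 2 * K * Y - (K - G * uu) with hW
  clear_value Y K G W
  have dt : ∀ p, dd (t * p) = t * dd p := dd_X_mul
  have dK : dd K = 2 * t * uu - 1 := by
    rw [hK, map_add, map_sub, dd_one, dt, pow_two, dd_mul, dd_uu]; ring
  have dG : dd G = 0 := by
    rw [hG, pow_two, mul_assoc, dt, dt, dd_emb]; ring
  have E1 : (2 * t * uu - 1) * Y ^ 2 - ((2 * t * uu - 1) - G) * Y - t + W * dd Y = 0 := by
    have := congrArg dd E0
    rw [map_add, map_sub, pow_two, dd_mul, dd_mul, dd_mul, dt, map_sub, map_sub, dd_mul, dd_uu, dd_one,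
      dK, dG, map_zero] at this
    rw [hW]
    linear_combination this
  -- pass to the quotient
  let φ : RR →+* RR ⧸ Ideal.span {W} := Ideal.Quotient.mk _
  have hφW : φ W = 0 := Ideal.Quotient.eq_zero_iff_mem.2 (Ideal.mem_span_singleton_self W)
  have hunit : ∀ r, IsUnit (φ (1 + t * r)) := fun r => (isUnit_one_add r).map φ
  have hinj : ∀ s : SS, φ (emb s) = 0 → s = 0 := by
    intro s hs
    have hs := Ideal.mem_span_singleton.1 (Ideal.Quotient.eq_zero_iff_mem.1 hs)
    by_contra hne
    obtain ⟨z, hz⟩ := hs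
    have hW0 : PowerSeries.constantCoeff W = 1 - Polynomial.X := by
      rw [hW, hK, hY, hG, ht, two_mul, add_mul]; simp [uu]
    obtain ⟨s', hs'⟩ := PowerSeries.X_pow_order_dvd (φ := s)
    set k := s.order.toNat with hk
    have hs'0 : PowerSeries.constantCoeff s' ≠ 0 := by
      intro h0
      have h1 : PowerSeries.coeff k s = 0 := by
        rw [hs']
        have := PowerSeries.coeff_X_pow_mul s' k 0
        rw [zero_add] at this
        rw [this]; simpa using h0
      exact PowerSeries.coeff_order hne h1
    have hdv : t ^ k ∣ W * z := by
      rw [← hz, hs', map_mul, map_pow, emb_X]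
      exact dvd_mul_right _ _
    have hnd : ¬ t ∣ W := by
      rw [ht, PowerSeries.X_dvd_iff, hW0]
      intro h
      have := congrArg (Polynomial.eval 0) h
      simp at this
    obtain ⟨z', hz'⟩ := (PowerSeries.X_prime (R := Polynomial ℚ)).pow_dvd_of_dvd_mul_left k hnd hdv
    have h3 : emb s' = W * z' := by
      have h4 : t ^ k * emb s' = t ^ k * (W * z') := by
        have : emb s = t ^ k * emb s' := by conv_lhs => rw [hs', map_mul, map_pow, emb_X]
        rw [← this, hz, hz']; ring
      exact mul_left_cancel₀ (pow_ne_zero _ PowerSeries.X_ne_zero) h4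
    have h5 := congrArg (fun x => Polynomial.eval 1 (PowerSeries.constantCoeff x)) h3
    simp only [map_mul, hW0] at h5
    rw [emb, ← PowerSeries.coeff_zero_eq_constantCoeff_apply, PowerSeries.coeff_map] at h5
    simp at h5
    exact hs'0 h5
  -- 1 - u is divisible by t in the quotient
  obtain ⟨e, he⟩ : ∃ e : RR, (1 - 2 * t * P) * e = 1 := by
    have := isUnit_one_add (-2 * P)
    obtain ⟨e, he⟩ := this.exists_right_inv
    exact ⟨e, by rw [ht]; linear_combination he⟩
  set s : RR := uu ^ 2 + t * emb (ev P) * uu * e with hs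
  have hu : φ uu = 1 + φ t * φ s := by
    have h1 : uu - (1 + t * s) = -(e * W) := by
      rw [hW, hs, hG, hK, hY]
      linear_combination (1 - uu + t * uu ^ 2) * he
    have h2 := congrArg φ h1
    rw [map_neg, map_mul, hφW] at h2
    simp only [map_sub, map_add, map_mul, map_one] at h2
    linear_combination h2
  have hYφ : φ Y = 1 - φ t * φ P := by rw [hY]; simp
  have F0 := congrArg φ E0
  have F1 := congrArg φ E1
  have FW := congrArg φ hW
  rw [hφW] at FW
  rw [map_add, map_mul φ W, hφW] at F1
  have FK := congrArg φ hK
  simp only [map_add, map_sub, map_mul, map_pow, map_one, map_zero, map_ofNat] at F0 F1 FW FK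
  rw [FK] at F0 FW
  set u' := φ uu with hu'
  set y := φ Y
  set τ := φ t
  set g := φ G
  have B1 : (1 - u' + τ * u' ^ 2) * y ^ 2 = τ * (1 - u') := by
    linear_combination (-y) * FW - F0
  have B2 : (u' - 2) * y ^ 2 + (1 - τ * u' ^ 2) * y - τ * u' = 0 := by
    linear_combination u' * F1 + y * FW
  have B3 : (1 - u' * y) * ((u' * y) ^ 3 - τ * u' ^ 2 * (u' * y) * (1 + u' * y + (u' * y) ^ 2)
      + (τ * u' ^ 2) ^ 2 * (1 + u' * y) ^ 2) = 0 := by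
    linear_combination ((u' * y) ^ 2 - τ * u' ^ 2) * u' ^ 2 * B2 +
      (u' * y + 1) * (u' * y - τ * u' ^ 2) * u' ^ 2 * B1
  have B4 : u' * y = 1 := by
    set vR := 1 + t * s with hvR
    set bR := vR * (1 - t * P) with hbR
    have hu1 : IsUnit (bR ^ 3 - t * vR ^ 2 * bR * (1 + bR + bR ^ 2) + (t * vR ^ 2) ^ 2 * (1 + bR) ^ 2) := by
      rw [PowerSeries.isUnit_iff_constantCoeff]
      simp [hbR, hvR, ht]
    have hu2 := hu1.map φ
    have e1 : φ vR = u' := by rw [hvR, hu]; simp [τ]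
    have e2 : φ bR = u' * y := by rw [hbR, map_mul, e1, hYφ]; simp [τ]
    simp only [map_add, map_sub, map_mul, map_pow, map_one, e1, e2] at hu2
    have := (hu2.mul_left_eq_zero).1 B3
    linear_combination -this
  have B5 : u' = 1 + τ * u' ^ 3 := by
    linear_combination (-u' ^ 2) * B1 + (1 - u' + τ * u' ^ 2) * (u' * y + 1) * B4
  have B6 : u' = φ (emb A) := by
    have hA' := congrArg (fun x => φ (emb x)) hA
    simp only [map_add, map_mul, map_pow, map_one, emb_X] at hA'
    change φ (emb A) = 1 + τ * φ (emb A) ^ 3 at hA'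
    have h1 := hunit (-(uu ^ 2 + uu * emb A + emb A ^ 2))
    simp only [map_add, map_mul, map_pow, map_one, map_neg] at h1
    have h2 : (u' - φ (emb A)) * (1 + τ * -(u' ^ 2 + u' * φ (emb A) + φ (emb A) ^ 2)) = 0 := by
      linear_combination B5 - hA'
    exact sub_eq_zero.1 (h1.mul_left_eq_zero.1 h2)
  have B7 : φ (emb (PowerSeries.X ^ 2 * ev P * A ^ 2 - (1 - A + PowerSeries.X * A ^ 2) * (A - 2))) = 0 := by
    have hg := congrArg φ hG
    simp only [map_add, map_sub, map_mul, map_pow, map_one, map_ofNat, emb_X] at hg ⊢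
    rw [← B6]
    change τ ^ 2 * φ (emb (ev P)) * u' ^ 2 - (1 - u' + τ * u' ^ 2) * (u' - 2) = 0
    change g = τ ^ 2 * φ (emb (ev P)) at hg
    rw [← hg]
    linear_combination (-u') * FW - 2 * (1 - u' + τ * u' ^ 2) * B4
  have B8 := hinj _ B7
  have hA0 : A ≠ 0 := by
    rintro rfl
    simp at hA
  have B9 : (PowerSeries.X * A ^ 2) * (PowerSeries.X * ev P) = (PowerSeries.X * A ^ 2) * ((1 - A) * (A - 2)) := by
    linear_combination B8 - (A - 2) * hA
  exact mul_left_cancel₀ (mul_ne_zero PowerSeries.X_ne_zero (pow_ne_zero 2 hA0)) B9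

end Dom

namespace Dom

/-! ### Coefficients -/

theorem coeff_A (A : SS) (hA : A = 1 + PowerSeries.X * A ^ 3) (n a : ℕ) :
    PowerSeries.coeff n (A ^ (a + 1)) =
      ((a + 1) * (3 * n + a).factorial : ℚ) / (n.factorial * (2 * n + a + 1).factorial) := by
  have hrec : ∀ k, A ^ (k + 1) = A ^ k + PowerSeries.X * A ^ (k + 3) := by
    intro k
    have : A ^ (k + 1) = A ^ k * A := pow_succ _ _
    rw [this]
    nth_rewrite 2 [hA]
    ring
  have hA0 : PowerSeries.constantCoeff A = 1 := by
    rw [hA]; simp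
  induction n generalizing a with
  | zero =>
    rw [PowerSeries.coeff_zero_eq_constantCoeff_apply, map_pow, hA0, one_pow]
    simp only [mul_zero, zero_add, Nat.factorial_zero, Nat.factorial_succ]
    have := Nat.factorial_ne_zero a
    push_cast
    field_simp
  | succ n ih =>
    induction a with
    | zero =>
      rw [hrec 0, map_add, PowerSeries.coeff_succ_X_mul, ih 2]
      rw [show 3 * (n + 1) + 0 = (3 * n + 2) + 1 by ring, show 2 * (n + 1) + 0 + 1 = 2 * n + 2 + 1 by ring,
        Nat.factorial_succ (3 * n + 2), Nat.factorial_succ n]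
      have h1 := Nat.factorial_ne_zero n
      have h2 := Nat.factorial_ne_zero (2 * n + 2 + 1)
      simp only [pow_zero, PowerSeries.coeff_one]
      push_cast
      simp
      field_simp
      ring
    | succ a iha =>
      rw [hrec (a + 1), map_add, PowerSeries.coeff_succ_X_mul, iha, ih (a + 3)]
      rw [show 3 * (n + 1) + (a + 1) = (3 * n + a + 3) + 1 by ring,
        show 2 * (n + 1) + (a + 1) + 1 = (2 * n + a + 3) + 1 by ring,
        show 2 * (n + 1) + a + 1 = (2 * n + a + 3) by ring,
        show 2 * n + (a + 3) + 1 = (2 * n + a + 3) + 1 by ring,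
        show 3 * (n + 1) + a = (3 * n + a + 3) by ring,
        show 3 * n + (a + 3) = (3 * n + a + 3) by ring,
        Nat.factorial_succ (3 * n + a + 3), Nat.factorial_succ n, Nat.factorial_succ (2 * n + a + 3)]
      have h1 := Nat.factorial_ne_zero n
      have h2 := Nat.factorial_ne_zero (2 * n + a + 3)
      push_cast
      field_simp
      ring

theorem fcount_closed (N : ℕ) :
    (N + 2).factorial * (2 * N + 3).factorial * fcount N [0] = 2 * (3 * N + 3).factorial := by
  obtain ⟨A, hA⟩ := exists_A
  obtain ⟨P, Q, hP, hQ⟩ := exists_PQ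
  have h1 := coeff_ev_P P Q hP hQ N
  have h2 := key P Q A hA hP hQ
  rw [← PowerSeries.coeff_succ_X_mul, h2,
    show (1 - A) * (A - 2) = A ^ (0 + 1) + A ^ (0 + 1) + A ^ (0 + 1) - A ^ (1 + 1) - 1 - 1 by ring] at h1
  simp only [map_sub, map_add, coeff_A A hA, PowerSeries.coeff_one] at h1
  rw [show 3 * (N + 1) + 0 = 3 * N + 3 by ring, show 2 * (N + 1) + 0 + 1 = 2 * N + 3 by ring,
    show 3 * (N + 1) + 1 = 3 * N + 3 + 1 by ring,
    Nat.factorial_succ (3 * N + 3), Nat.factorial_succ (2 * N + 3)] at h1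
  have h3 := Nat.factorial_ne_zero (N + 1)
  have h4 := Nat.factorial_ne_zero (2 * N + 3)
  have h5 : ((N + 2).factorial * (2 * N + 3).factorial * fcount N [0] : ℚ) = 2 * (3 * N + 3).factorial := by
    rw [← h1, Nat.factorial_succ (N + 1)]
    push_cast
    simp
    field_simp
    ring
  exact_mod_cast h5

end Dom

namespace Dom
open scoped List

/-! ### Dominoes as pairs of lists -/

inductive Letter
  | L (b : List ℕ)
  | R (r : ℕ)

def els : Letter → List ℕ
  | .L b => b
  | .R r => [r]

def Aof : List Letter → List ℕ
  | [] => []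
  | .L b :: w => b ++ Aof w
  | .R _ :: w => Aof w

def rs : List Letter → List ℕ
  | [] => []
  | .L _ :: w => rs w
  | .R r :: w => r :: rs w

def Ls : List Letter → List Letter
  | [] => []
  | .L b :: w => .L b :: Ls w
  | .R _ :: w => Ls w

def shape : List Letter → List ℕ
  | [] => [0]
  | .L _ :: w => pushTop (shape w)
  | .R _ :: w => 0 :: shape w

abbrev St := List Letter × List ℕ

def cuts (m : ℕ) : List ℕ → List ℕ → List Letter → List St
  | _, _, [] => []
  | acc, tl, .L b :: w => (.L (acc ++ b ++ [m]) :: w, tl) :: cuts m (acc ++ b) tl w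
  | acc, tl, .R r :: w => cuts m acc (r :: tl) w

def pops (m : ℕ) : List Letter → List ℕ → List Letter → List St
  | pre, tl, [] => [(.R m :: pre, tl)]
  | pre, tl, .L b :: w => pops m (pre ++ [.L b]) tl w
  | pre, tl, .R r :: w => (.R m :: (pre ++ .R r :: w), tl) :: pops m pre (r :: tl) w

def children (m : ℕ) (s : St) : List St :=
  (.L [m] :: s.1, s.2) :: (cuts m [] s.2 s.1 ++ pops m [] s.2 s.1)

def gen : ℕ → List St
  | 0 => [([], [])]
  | m + 1 => (gen m).flatMap (children m)

def dom (s : St) : List ℕ × List ℕ := (Aof s.1, (rs s.1).reverse ++ s.2)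

/-! counting -/

theorem shape_ne (w : List Letter) : ∃ l r, shape w = l :: r := by
  induction w with
  | nil => exact ⟨_, _, rfl⟩
  | cons x w ih =>
    obtain ⟨l, r, h⟩ := ih
    cases x with
    | L b => exact ⟨l + 1, r, by simp [shape, h, pushTop]⟩
    | R b => exact ⟨0, _, rfl⟩

theorem sum_cuts (F : List ℕ → ℕ) (m : ℕ) (w : List Letter) (acc tl : List ℕ) :
    ((cuts m acc tl w).map (fun s => F (shape s.1))).sum = cutsum F (shape w) := by
  induction w generalizing acc tl with
  | nil => simp [cuts, shape, cutsum]
  | cons x w ih =>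
    obtain ⟨l, r, h⟩ := shape_ne w
    cases x with
    | L b =>
      simp only [cuts, List.map_cons, List.sum_cons, ih, shape, h, pushTop, cutsum,
        Finset.sum_range_succ]
      ring
    | R b => simp [cuts, ih, shape, cutsum]

theorem shape_pre (pre w : List Letter) (hpre : Ls pre = pre) (l : ℕ) (r : List ℕ)
    (h : shape w = l :: r) : shape (pre ++ w) = (l + pre.length) :: r := by
  induction pre with
  | nil => simpa using h
  | cons x pre ih =>
    cases x with
    | L b =>
      have h2 : Ls pre = pre := by simpa [Ls] using hpre
      simp [shape, ih h2, pushTop, add_assoc]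
    | R b =>
      exfalso
      have : ∀ w, (Ls w).length ≤ w.length := by
        intro w
        induction w with
        | nil => simp [Ls]
        | cons y w ih => cases y <;> simp [Ls] <;> omega
      have h1 := this pre
      have h2 := congrArg List.length hpre
      simp [Ls] at h2
      omega

theorem Ls_append (p q : List Letter) : Ls (p ++ q) = Ls p ++ Ls q := by
  induction p with
  | nil => rfl
  | cons x p ih => cases x <;> simp [Ls, ih]

theorem Aof_append (p q : List Letter) : Aof (p ++ q) = Aof p ++ Aof q := by
  induction p with
  | nil => rfl
  | cons x p ih => cases x <;> simp [Aof, ih]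

theorem rs_append (p q : List Letter) : rs (p ++ q) = rs p ++ rs q := by
  induction p with
  | nil => rfl
  | cons x p ih => cases x <;> simp [rs, ih]

theorem rs_Ls (p : List Letter) : rs (Ls p) = [] := by
  induction p with
  | nil => rfl
  | cons x p ih => cases x <;> simp [Ls, rs, ih]

theorem Aof_Ls (p : List Letter) : Aof (Ls p) = Aof p := by
  induction p with
  | nil => rfl
  | cons x p ih => cases x <;> simp [Ls, Aof, ih]

theorem Ls_sublist (p : List Letter) : Ls p <+ p := by
  induction p with
  | nil => exact List.Sublist.refl _
  | cons x p ih =>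
    cases x with
    | L b => exact ih.cons_cons _
    | R b => exact ih.cons _

theorem sum_pops (F : List ℕ → ℕ) (m : ℕ) (w pre : List Letter) (tl : List ℕ) (hpre : Ls pre = pre)
    (l : ℕ) (r : List ℕ) (h : shape w = l :: r) :
    ((pops m pre tl w).map (fun s => F (shape s.1))).sum
      = psum (fun s => F (0 :: s)) ((l + pre.length) :: r) := by
  induction w generalizing pre tl l r with
  | nil =>
    have := shape_pre pre [] hpre 0 [] rfl
    simp only [List.append_nil] at this
    simp only [shape, List.cons.injEq] at h
    obtain ⟨rfl, rfl⟩ := h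
    simp [pops, shape, this, psum]
  | cons x w ih =>
    obtain ⟨l', r', h'⟩ := shape_ne w
    cases x with
    | L b =>
      rw [shape, h', pushTop, List.cons.injEq] at h
      obtain ⟨rfl, rfl⟩ := h
      rw [pops, ih _ _ (by rw [Ls_append, hpre]; rfl) _ _ h']
      simp [add_comm, add_left_comm]
    | R b =>
      have h1 := shape_pre pre (.R b :: w) hpre l r h
      rw [shape, h', List.cons.injEq] at h
      obtain ⟨rfl, rfl⟩ := h
      rw [pops, List.map_cons, List.sum_cons, ih _ _ hpre _ _ h', psum]
      simp only [shape, h1]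
      rw [show 0 + pre.length + l' = l' + pre.length by ring]

theorem sum_children (N m : ℕ) (s : St) :
    ((children m s).map (fun s => fcount N (shape s.1))).sum = fcount (N + 1) (shape s.1) := by
  obtain ⟨l, r, h⟩ := shape_ne s.1
  rw [children, List.map_cons, List.map_append, List.sum_cons, List.sum_append, sum_cuts,
    sum_pops _ _ _ _ _ rfl _ _ h, fcount]
  simp [shape, h]
  ring

theorem sum_gen (K N : ℕ) : ((gen K).map (fun s => fcount N (shape s.1))).sum = fcount (N + K) [0] := by
  induction K generalizing N with
  | zero => simp [gen, shape]
  | succ K ih =>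
    have : ∀ l : List St, ((l.flatMap (children K)).map (fun s => fcount N (shape s.1))).sum =
        (l.map (fun s => fcount (N + 1) (shape s.1))).sum := by
      intro l
      induction l with
      | nil => simp
      | cons a l ihl =>
        rw [List.flatMap_cons, List.map_append, List.sum_append, ihl, sum_children, List.map_cons,
          List.sum_cons]
    rw [gen, this, ih]
    congr 1; ring

theorem length_gen (K : ℕ) : (gen K).length = fcount K [0] := by
  have := sum_gen K 0
  rw [zero_add] at this
  rw [← this]
  simp [fcount]

/-! semantics -/

def Valid (A B : List ℕ) : Prop :=
  (∀ a b c, a < b → b < c → ¬ [a, c, b] <+ A) ∧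
  (∀ a b c, a < b → b < c → ¬ [b, a, c] <+ B) ∧
  (∀ a b c d, a < b → b < c → c < d → [a, c] <+ A → ¬ [b, d] <+ B)

def DD (m : ℕ) (d : List ℕ × List ℕ) : Prop :=
  (d.1 ++ d.2).Perm (List.range m) ∧ Valid d.1 d.2

theorem sub_ins_notMem {l X Y : List ℕ} {m : ℕ} (h : l <+ X ++ m :: Y) (hm : m ∉ l) : l <+ X ++ Y := by
  obtain ⟨p, q, rfl, hp, hq⟩ := List.sublist_append_iff.1 h
  refine hp.append ?_
  rcases List.sublist_cons_iff.1 hq with h | ⟨r, rfl, _⟩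
  · exact h
  · simp at hm

theorem sub_ins_mem {l₁ l₂ X Y : List ℕ} {m : ℕ} (h : l₁ ++ m :: l₂ <+ X ++ m :: Y) (hX : m ∉ X)
    (hY : m ∉ Y) : l₁ <+ X ∧ l₂ <+ Y := by
  obtain ⟨p, q, hpq, hp, hq⟩ := List.sublist_append_iff.1 h
  rcases List.append_eq_append_iff.1 hpq with ⟨a, h1, h2⟩ | ⟨a, h1, h2⟩
  · cases a with
    | nil =>
      simp only [List.nil_append, List.append_nil] at h1 h2
      subst h1 h2
      exact ⟨hp, List.cons_sublist_cons.1 hq⟩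
    | cons x a =>
      simp only [List.cons_append, List.cons.injEq] at h2
      exact absurd (hp.subset (by rw [h1, ← h2.1]; simp)) hX
  · subst h1 h2
    cases a with
    | nil =>
      rw [List.nil_append] at hq
      exact ⟨by simpa using hp, List.cons_sublist_cons.1 hq⟩
    | cons x a =>
      exfalso
      rcases List.sublist_cons_iff.1 hq with h | ⟨r, h3, h4⟩
      · exact hY (h.subset (by simp))
      · simp only [List.cons_append, List.cons.injEq] at h3
        exact hY (h4.subset (by rw [← h3.2]; simp))

theorem DD.lt {m : ℕ} {A B : List ℕ} (h : DD m (A, B)) {x : ℕ} (hx : x ∈ A ∨ x ∈ B) : x < m := by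
  have := (h.1.mem_iff (a := x)).1 (by simpa using hx)
  simpa using this

theorem DD.nodup {m : ℕ} {A B : List ℕ} (h : DD m (A, B)) : (A ++ B).Nodup :=
  h.1.nodup_iff.2 List.nodup_range

theorem perm_ins_left {m : ℕ} {X Y B : List ℕ} :
    ((X ++ m :: Y) ++ B).Perm (List.range (m + 1)) ↔ ((X ++ Y) ++ B).Perm (List.range m) := by
  rw [List.range_succ]
  have h1 : ((X ++ m :: Y) ++ B).Perm (m :: (X ++ Y ++ B)) := by
    simpa using List.perm_middle (a := m) (l₁ := X) (l₂ := Y ++ B)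
  have h2 : (List.range m ++ [m]).Perm (m :: List.range m) := by
    simpa using List.perm_append_comm (l₁ := List.range m) (l₂ := [m])
  rw [h1.congr_left, h2.congr_right, List.perm_cons]

theorem perm_ins_right {m : ℕ} {X Y A : List ℕ} :
    (A ++ (X ++ m :: Y)).Perm (List.range (m + 1)) ↔ (A ++ (X ++ Y)).Perm (List.range m) := by
  have := perm_ins_left (m := m) (X := A ++ X) (Y := Y) (B := [])
  simpa using this

theorem valid_mono {A B A' B' : List ℕ} (h : Valid A B) (hA : A' <+ A) (hB : B' <+ B) : Valid A' B' :=
  ⟨fun a b c h1 h2 h3 => h.1 a b c h1 h2 (h3.trans hA),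
   fun a b c h1 h2 h3 => h.2.1 a b c h1 h2 (h3.trans hB),
   fun a b c d h1 h2 h3 h4 h5 => h.2.2 a b c d h1 h2 h3 (h4.trans hA) (h5.trans hB)⟩

theorem lemL {m : ℕ} {X Y B : List ℕ} (h : DD m (X ++ Y, B)) :
    DD (m + 1) (X ++ m :: Y, B) ↔ ∀ x ∈ X, ∀ y ∈ Y, y < x := by
  have hX : ∀ x ∈ X, x < m := fun x hx => h.lt (Or.inl (by simp [hx]))
  have hY : ∀ x ∈ Y, x < m := fun x hx => h.lt (Or.inl (by simp [hx]))
  have hB : ∀ x ∈ B, x < m := fun x hx => h.lt (Or.inr hx)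
  have mX : m ∉ X := fun hx => (hX m hx).false
  have mY : m ∉ Y := fun hx => (hY m hx).false
  have hle : ∀ x ∈ X ++ m :: Y, x ≤ m := by
    intro x hx
    rcases List.mem_append.1 hx with h | h
    · exact (hX x h).le
    · rcases List.mem_cons.1 h with h | h
      · exact h.le
      · exact (hY x h).le
  constructor
  · intro h' x hx y hy
    by_contra hlt
    have hne : x ≠ y := by
      have hn := h.nodup
      rw [List.nodup_append, List.nodup_append] at hn
      exact hn.1.2.2 x hx y hy
    refine h'.2.1 x y m (by omega) (hY y hy) ?_
    have : [x] ++ [m, y] <+ X ++ m :: Y :=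
      (List.singleton_sublist.2 hx).append ((List.singleton_sublist.2 hy).cons_cons m)
    simpa using this
  · intro hXY
    refine ⟨perm_ins_left.2 h.1, ?_, h.2.2.1, ?_⟩
    · intro a b c h1 h2 h3
      have hc := hle c (h3.subset (by simp))
      by_cases hcm : c = m
      · subst hcm
        have h4 : [a] ++ c :: [b] <+ X ++ c :: Y := by simpa using h3
        obtain ⟨h5, h6⟩ := sub_ins_mem h4 mX mY
        have := hXY a (List.singleton_sublist.1 h5) b (List.singleton_sublist.1 h6)
        omega
      · exact h.2.1 a b c h1 h2 (sub_ins_notMem h3 (by simp; omega))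
    · intro a b c d h1 h2 h3 h4 h5
      have hd := hB d (h5.subset (by simp))
      exact h.2.2.2 a b c d h1 h2 h3 (sub_ins_notMem h4 (by simp; omega)) h5

def Good (A X : List ℕ) : Prop :=
  X.Pairwise (· < ·) ∧ ∀ x ∈ X, ∀ a c, a < x → x < c → ¬ [a, c] <+ A

theorem lemR {m : ℕ} {X Y A : List ℕ} (h : DD m (A, X ++ Y)) :
    DD (m + 1) (A, X ++ m :: Y) ↔ Good A X := by
  have hX : ∀ x ∈ X, x < m := fun x hx => h.lt (Or.inr (by simp [hx]))
  have hY : ∀ x ∈ Y, x < m := fun x hx => h.lt (Or.inr (by simp [hx]))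
  have hA : ∀ x ∈ A, x < m := fun x hx => h.lt (Or.inl hx)
  have mX : m ∉ X := fun hx => (hX m hx).false
  have mY : m ∉ Y := fun hx => (hY m hx).false
  have hle : ∀ x ∈ X ++ m :: Y, x ≤ m := by
    intro x hx
    rcases List.mem_append.1 hx with h | h
    · exact (hX x h).le
    · rcases List.mem_cons.1 h with h | h
      · exact h.le
      · exact (hY x h).le
  constructor
  · intro h'
    constructor
    · rw [List.pairwise_iff_forall_sublist]
      intro b a hba
      by_contra hlt
      have hn : X.Nodup := by
        have hn := h.nodup
        rw [List.nodup_append, List.nodup_append] at hn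
        exact hn.2.1.1
      have hne : b ≠ a := by
        have := hn.sublist hba
        simpa using this
      refine h'.2.2.1 a b m (by omega) (hX b (hba.subset (by simp))) ?_
      have : [b, a] ++ [m] <+ X ++ m :: Y :=
        hba.append ((List.nil_sublist Y).cons_cons m)
      simpa using this
    · intro x hx a c h1 h2 h3
      refine h'.2.2.2 a x c m h1 h2 (hA c (h3.subset (by simp))) h3 ?_
      have : [x] ++ [m] <+ X ++ m :: Y :=
        (List.singleton_sublist.2 hx).append ((List.nil_sublist Y).cons_cons m)
      simpa using this
  · rintro ⟨g1, g2⟩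
    refine ⟨perm_ins_right.2 h.1, h.2.1, ?_, ?_⟩
    · intro a b c h1 h2 h3
      have hc := hle c (h3.subset (by simp))
      by_cases hcm : c = m
      · subst hcm
        have h4 : [b, a] ++ c :: [] <+ X ++ c :: Y := by simpa using h3
        obtain ⟨h5, -⟩ := sub_ins_mem h4 mX mY
        have := List.pairwise_iff_forall_sublist.1 g1 h5
        omega
      · exact h.2.2.1 a b c h1 h2 (sub_ins_notMem h3 (by simp; omega))
    · intro a b c d h1 h2 h3 h4 h5
      have hd := hle d (h5.subset (by simp))
      by_cases hdm : d = m
      · subst hdm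
        have h6 : [b] ++ d :: [] <+ X ++ d :: Y := by simpa using h5
        obtain ⟨h7, -⟩ := sub_ins_mem h6 mX mY
        exact g2 b (List.singleton_sublist.1 h7) a c h1 h2 h4
      · exact h.2.2.2 a b c d h1 h2 h3 h4 (sub_ins_notMem h5 (by simp; omega))

theorem DD_succ {m : ℕ} {A B : List ℕ} (h : DD (m + 1) (A, B)) :
    (∃ X Y, A = X ++ m :: Y ∧ DD m (X ++ Y, B)) ∨ (∃ X Y, B = X ++ m :: Y ∧ DD m (A, X ++ Y)) := by
  have hm : m ∈ A ++ B := (h.1.mem_iff).2 (by simp)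
  rcases List.mem_append.1 hm with hm | hm
  · obtain ⟨X, Y, rfl⟩ := List.append_of_mem hm
    refine Or.inl ⟨X, Y, rfl, perm_ins_left.1 h.1, valid_mono h.2 ?_ (List.Sublist.refl _)⟩
    exact (List.Sublist.refl X).append (List.sublist_cons_self m Y)
  · obtain ⟨X, Y, rfl⟩ := List.append_of_mem hm
    refine Or.inr ⟨X, Y, rfl, perm_ins_right.1 h.1, valid_mono h.2 (List.Sublist.refl _) ?_⟩
    exact (List.Sublist.refl X).append (List.sublist_cons_self m Y)

end Dom

namespace Dom
open scoped List

structure Inv (m : ℕ) (s : St) : Prop where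
  pw : s.1.Pairwise (fun x y => ∀ a ∈ els x, ∀ b ∈ els y, b < a)
  blk : ∀ b, Letter.L b ∈ s.1 → b ≠ [] ∧
    ∀ X Y, b = X ++ Y → X ≠ [] → Y ≠ [] → ∃ x ∈ X, ∃ y ∈ Y, x < y
  tail : ∀ y r, s.2 = y :: r → (∃ x ∈ rs s.1, y < x) ∨ ∃ a c, [a, c] <+ Aof s.1 ∧ a < y ∧ y < c
  dd : DD m (dom s)

theorem mem_Aof {w : List Letter} {a : ℕ} (h : a ∈ Aof w) : ∃ x ∈ w, a ∈ els x := by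
  induction w with
  | nil => simp [Aof] at h
  | cons x w ih =>
    cases x with
    | L b =>
      rcases List.mem_append.1 h with h | h
      · exact ⟨_, List.mem_cons_self, h⟩
      · obtain ⟨x, hx, h⟩ := ih h
        exact ⟨x, List.mem_cons_of_mem _ hx, h⟩
    | R r =>
      obtain ⟨x, hx, h⟩ := ih h
      exact ⟨x, List.mem_cons_of_mem _ hx, h⟩

theorem mem_rs {w : List Letter} {a : ℕ} (h : a ∈ rs w) : Letter.R a ∈ w := by
  induction w with
  | nil => simp [rs] at h
  | cons x w ih =>
    cases x with
    | L b => exact List.mem_cons_of_mem _ (ih h)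
    | R r =>
      rcases List.mem_cons.1 h with rfl | h
      · exact List.mem_cons_self
      · exact List.mem_cons_of_mem _ (ih h)

theorem mem_els {w : List Letter} {x : Letter} {a : ℕ} (hx : x ∈ w) (ha : a ∈ els x) :
    a ∈ Aof w ∨ a ∈ rs w := by
  induction w with
  | nil => simp at hx
  | cons y w ih =>
    rcases List.mem_cons.1 hx with rfl | h
    · cases x with
      | L b => exact Or.inl (List.mem_append_left _ ha)
      | R r => right; simp [els] at ha; simp [rs, ha]
    · rcases ih h with h | h
      · left; cases y <;> simp [Aof, h]
      · right; cases y <;> simp [rs, h]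

theorem mem_cuts {m : ℕ} {w : List Letter} {acc tl : List ℕ} {t : St} (h : t ∈ cuts m acc tl w) :
    ∃ pre b rest, w = pre ++ Letter.L b :: rest ∧
      t = (Letter.L (acc ++ Aof pre ++ b ++ [m]) :: rest, (rs pre).reverse ++ tl) := by
  induction w generalizing acc tl with
  | nil => simp [cuts] at h
  | cons x w ih =>
    cases x with
    | L b =>
      rw [cuts, List.mem_cons] at h
      rcases h with rfl | h
      · exact ⟨[], b, w, rfl, by simp [Aof, rs]⟩
      · obtain ⟨pre, b', rest, rfl, rfl⟩ := ih h
        exact ⟨.L b :: pre, b', rest, rfl, by simp [Aof, rs]⟩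
    | R r =>
      obtain ⟨pre, b', rest, rfl, rfl⟩ := ih h
      exact ⟨.R r :: pre, b', rest, rfl, by simp [Aof, rs]⟩

theorem mem_pops {m : ℕ} {w p : List Letter} {tl : List ℕ} {t : St} (h : t ∈ pops m p tl w) :
    ∃ pre rest, w = pre ++ rest ∧
      t = (Letter.R m :: (p ++ Ls pre ++ rest), (rs pre).reverse ++ tl) := by
  induction w generalizing p tl with
  | nil =>
    simp only [pops, List.mem_singleton] at h
    exact ⟨[], [], rfl, by simp [h, Ls, rs]⟩
  | cons x w ih =>
    cases x with
    | L b =>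
      obtain ⟨pre, rest, rfl, rfl⟩ := ih h
      exact ⟨.L b :: pre, rest, rfl, by simp [Ls, rs]⟩
    | R r =>
      rw [pops, List.mem_cons] at h
      rcases h with rfl | h
      · exact ⟨[], .R r :: w, rfl, by simp [Ls, rs]⟩
      · obtain ⟨pre, rest, rfl, rfl⟩ := ih h
        exact ⟨.R r :: pre, rest, rfl, by simp [Ls, rs]⟩

theorem rs_pw {w : List Letter} (h : w.Pairwise (fun x y => ∀ a ∈ els x, ∀ b ∈ els y, b < a)) :
    (rs w).Pairwise (fun a b => b < a) := by
  induction w with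
  | nil => simp [rs]
  | cons x w ih =>
    rw [List.pairwise_cons] at h
    cases x with
    | L b => exact ih h.2
    | R r =>
      rw [rs, List.pairwise_cons]
      refine ⟨fun a ha => h.1 _ (mem_rs ha) r (by simp [els]) a (by simp [els]), ih h.2⟩

theorem no_arc {w : List Letter} (h : w.Pairwise (fun x y => ∀ a ∈ els x, ∀ b ∈ els y, b < a))
    {r a c : ℕ} (hr : r ∈ rs w) (h1 : a < r) (h2 : r < c) : ¬ [a, c] <+ Aof w := by
  intro h3
  obtain ⟨p, q, rfl⟩ := List.append_of_mem (mem_rs hr)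
  rw [List.pairwise_append, List.pairwise_cons] at h
  obtain ⟨-, ⟨hq, -⟩, hp⟩ := h
  have hp' : ∀ x ∈ Aof p, r < x := by
    intro x hx
    obtain ⟨y, hy, hx⟩ := mem_Aof hx
    exact hp y hy _ List.mem_cons_self x hx r (by simp [els])
  have hq' : ∀ x ∈ Aof q, x < r := by
    intro x hx
    obtain ⟨y, hy, hx⟩ := mem_Aof hx
    exact hq y hy r (by simp [els]) x hx
  rw [Aof_append] at h3
  change [a, c] <+ Aof p ++ Aof q at h3
  obtain ⟨l1, l2, h4, h5, h6⟩ := List.sublist_append_iff.1 h3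
  cases l1 with
  | nil =>
    have h4 : [a, c] = l2 := h4
    subst h4
    have := hq' c (h6.subset (by simp))
    omega
  | cons x l =>
    simp only [List.cons_append, List.cons.injEq] at h4
    have := hp' x (h5.subset (by simp))
    omega

theorem Inv.fresh {m : ℕ} {s : St} (h : Inv m s) : m ∉ Aof s.1 ∧ m ∉ rs s.1 ∧ m ∉ s.2 := by
  refine ⟨fun hx => (h.dd.lt (Or.inl hx)).false, fun hx => (h.dd.lt (Or.inr ?_)).false,
    fun hx => (h.dd.lt (Or.inr ?_)).false⟩
  · simp [hx]
  · simp [hx]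

theorem Inv.els_lt {m : ℕ} {s : St} (h : Inv m s) {x : Letter} (hx : x ∈ s.1) {a : ℕ}
    (ha : a ∈ els x) : a < m := by
  rcases mem_els hx ha with h1 | h1
  · exact h.dd.lt (Or.inl h1)
  · exact h.dd.lt (Or.inr (by simp [h1]))

theorem Inv.push {m : ℕ} {s : St} (h : Inv m s) : Inv (m + 1) (.L [m] :: s.1, s.2) := by
  refine ⟨?_, ?_, ?_, ?_⟩
  · refine List.pairwise_cons.2 ⟨fun y hy a ha b hb => ?_, h.pw⟩
    simp only [els, List.mem_singleton] at ha
    subst ha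
    exact h.els_lt hy hb
  · intro b hb
    rcases List.mem_cons.1 hb with hb | hb
    · cases hb
      refine ⟨by simp, fun X Y hXY hX hY => ?_⟩
      exfalso
      have := congrArg List.length hXY
      have h1 := List.length_pos_of_ne_nil hX
      have h2 := List.length_pos_of_ne_nil hY
      simp at this
      omega
    · exact h.blk b hb
  · intro y r hy
    rcases h.tail y r hy with h1 | ⟨a, c, h1, h2⟩
    · exact Or.inl h1
    · exact Or.inr ⟨a, c, h1.cons _, h2⟩
  · have := (lemL (m := m) (X := []) (Y := Aof s.1) (B := (rs s.1).reverse ++ s.2) h.dd).2 (by simp)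
    exact this

theorem Inv.cut {m : ℕ} {pre rest : List Letter} {b tl : List ℕ}
    (h : Inv m (pre ++ Letter.L b :: rest, tl)) :
    Inv (m + 1) (Letter.L (Aof pre ++ b ++ [m]) :: rest, (rs pre).reverse ++ tl) := by
  have hpw := h.pw
  have hb := h.blk b (by simp)
  simp only [List.pairwise_append, List.pairwise_cons] at hpw
  obtain ⟨-, ⟨hp2, hp3⟩, hp4⟩ := hpw
  have key : ∀ x ∈ Aof pre ++ b, ∀ y ∈ rest, ∀ z ∈ els y, z < x := by
    intro x hx y hy z hz
    rcases List.mem_append.1 hx with hx | hx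
    · obtain ⟨u, hu, hx⟩ := mem_Aof hx
      exact hp4 u hu y (List.mem_cons_of_mem _ hy) x hx z hz
    · exact hp2 y hy x hx z hz
  have hlt : ∀ x ∈ Aof pre ++ b, x < m := by
    intro x hx
    refine h.dd.lt (Or.inl ?_)
    simp only [Aof_append, Aof]
    simp at hx ⊢
    tauto
  refine ⟨?_, ?_, ?_, ?_⟩
  · refine List.pairwise_cons.2 ⟨fun y hy x hx z hz => ?_, hp3⟩
    simp only [els] at hx
    rcases List.mem_append.1 hx with hx | hx
    · exact key x hx y hy z hz
    · simp only [List.mem_singleton] at hx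
      subst hx
      exact h.els_lt (by simp [hy]) hz
  · intro b' hb'
    rcases List.mem_cons.1 hb' with hb' | hb'
    · cases hb'
      refine ⟨by simp, fun X Y hXY hX hY => ?_⟩
      rcases List.eq_nil_or_concat Y with rfl | ⟨Y', z, rfl⟩
      · simp at hY
      · rw [List.concat_eq_append, ← List.append_assoc] at hXY
        have h1 := List.append_inj' hXY rfl
        obtain ⟨x, hx⟩ := List.exists_mem_of_ne_nil X hX
        have h2 := h1.2
        simp only [List.cons.injEq, and_true] at h2
        subst h2
        refine ⟨x, hx, m, by simp, hlt x ?_⟩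
        rw [h1.1]
        simp [hx]
    · exact h.blk b' (by simp [hb'])
  · intro y r hy
    rcases List.eq_nil_or_concat (rs pre) with h0 | ⟨l, z, h0⟩
    · simp only [h0, List.reverse_nil, List.nil_append] at hy
      rcases h.tail y r hy with ⟨x, hx, h1⟩ | ⟨a, c, h1, h2⟩
      · left
        refine ⟨x, ?_, h1⟩
        simpa [rs_append, rs, h0] using hx
      · right
        refine ⟨a, c, h1.trans ?_, h2⟩
        simp [Aof_append, Aof]
    · have hyz : y = z := by
        simp only [h0, List.concat_eq_append, List.reverse_append, List.reverse_cons,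
          List.reverse_nil, List.nil_append, List.cons_append, List.cons.injEq] at hy
        exact hy.1.symm
      subst hyz
      have hmem : y ∈ rs pre := by rw [h0]; simp
      right
      obtain ⟨b0, hb0⟩ := List.exists_mem_of_ne_nil b hb.1
      refine ⟨b0, m, ?_, ?_, ?_⟩
      · have h1 : [b0] ++ [m] <+ (Aof pre ++ b) ++ [m] :=
          (List.singleton_sublist.2 (by simp [hb0])).append (List.Sublist.refl _)
        exact h1.trans (List.sublist_append_left _ _)
      · exact hp4 _ (mem_rs hmem) _ List.mem_cons_self y (by simp [els]) b0 hb0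
      · exact h.els_lt (List.mem_append_left _ (mem_rs hmem)) (by simp [els])
  · have h1 := h.dd
    have e1 : dom (pre ++ Letter.L b :: rest, tl) =
        ((Aof pre ++ b) ++ Aof rest, (rs rest).reverse ++ ((rs pre).reverse ++ tl)) := by
      simp [dom, Aof_append, Aof, rs_append, rs]
    have e2 : dom (Letter.L (Aof pre ++ b ++ [m]) :: rest, (rs pre).reverse ++ tl) =
        ((Aof pre ++ b) ++ m :: Aof rest, (rs rest).reverse ++ ((rs pre).reverse ++ tl)) := by
      simp [dom, Aof, rs]
    rw [e1] at h1
    rw [e2, lemL h1]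
    intro x hx y hy
    obtain ⟨u, hu, hy⟩ := mem_Aof hy
    exact key x hx u hu y hy

theorem Inv.pop {m : ℕ} {pre rest : List Letter} {tl : List ℕ}
    (h : Inv m (pre ++ rest, tl)) :
    Inv (m + 1) (Letter.R m :: (Ls pre ++ rest), (rs pre).reverse ++ tl) := by
  have hsub : Ls pre ++ rest <+ pre ++ rest := (Ls_sublist pre).append (List.Sublist.refl _)
  refine ⟨?_, ?_, ?_, ?_⟩
  · refine List.pairwise_cons.2 ⟨fun y hy x hx z hz => ?_, h.pw.sublist hsub⟩
    simp only [els, List.mem_singleton] at hx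
    subst hx
    exact h.els_lt (hsub.subset hy) hz
  · intro b hb
    rcases List.mem_cons.1 hb with hb | hb
    · cases hb
    · exact h.blk b (hsub.subset hb)
  · intro y r hy
    left
    refine ⟨m, by simp [rs], h.dd.lt (Or.inr ?_)⟩
    have : y ∈ (rs pre).reverse ++ tl := by
      have hy : (rs pre).reverse ++ tl = y :: r := hy
      rw [hy]; simp
    simp only [rs_append]
    simp at this ⊢
    tauto
  · have h1 := h.dd
    have e1 : dom (pre ++ rest, tl) =
        (Aof (pre ++ rest), (rs rest).reverse ++ ((rs pre).reverse ++ tl)) := by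
      simp [dom, rs_append]
    have e2 : dom (Letter.R m :: (Ls pre ++ rest), (rs pre).reverse ++ tl) =
        (Aof (pre ++ rest), (rs rest).reverse ++ m :: ((rs pre).reverse ++ tl)) := by
      simp [dom, Aof, rs, rs_append, rs_Ls, Aof_append, Aof_Ls]
    rw [e1] at h1
    rw [e2, lemR h1]
    have hpw := rs_pw h.pw
    refine ⟨?_, fun x hx a c h1 h2 => no_arc h.pw (r := x) ?_ h1 h2⟩
    · rw [List.pairwise_reverse]
      rw [rs_append] at hpw
      exact (List.pairwise_append.1 hpw).2.1
    · simp only [rs_append]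
      simp at hx ⊢
      tauto

theorem Inv.child {m : ℕ} {s t : St} (h : Inv m s) (ht : t ∈ children m s) : Inv (m + 1) t := by
  obtain ⟨w, tl⟩ := s
  rw [children, List.mem_cons, List.mem_append] at ht
  rcases ht with rfl | ht | ht
  · exact h.push
  · obtain ⟨pre, b, rest, hw, rfl⟩ := mem_cuts ht
    have hw : w = _ := hw
    subst hw
    exact h.cut
  · obtain ⟨pre, rest, hw, rfl⟩ := mem_pops ht
    have hw : w = _ := hw
    subst hw
    exact h.pop

theorem Inv.zero : Inv 0 ([], []) := by
  refine ⟨by simp, by simp, by simp, ?_, ?_, ?_, ?_⟩ <;> simp [dom, Aof, rs]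

theorem gen_inv (m : ℕ) : ∀ s ∈ gen m, Inv m s := by
  induction m with
  | zero =>
    intro s hs
    simp only [gen, List.mem_singleton] at hs
    subst hs
    exact Inv.zero
  | succ m ih =>
    intro s hs
    rw [gen, List.mem_flatMap] at hs
    obtain ⟨t, ht, hs⟩ := hs
    exact (ih t ht).child hs

/-! completeness -/

theorem cuts_complete (m : ℕ) (w : List Letter) (acc tl X Y : List ℕ)
    (hb : ∀ b, Letter.L b ∈ w →
      ∀ X Y, b = X ++ Y → X ≠ [] → Y ≠ [] → ∃ x ∈ X, ∃ y ∈ Y, x < y)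
    (hw : Aof w = X ++ Y) (hX : X ≠ []) (hXY : ∀ x ∈ X, ∀ y ∈ Y, y < x) :
    ∃ t ∈ cuts m acc tl w, dom t = (acc ++ X ++ m :: Y, (rs w).reverse ++ tl) := by
  induction w generalizing acc tl X Y with
  | nil =>
    exfalso
    simp only [Aof] at hw
    exact hX (List.append_eq_nil_iff.1 hw.symm).1
  | cons x w ih =>
    have hb' := fun b hbw => hb b (List.mem_cons_of_mem _ hbw)
    cases x with
    | L b =>
      rw [Aof] at hw
      have first : ∀ X Y, b = X → Aof w = Y →
          ∃ t ∈ cuts m acc tl (Letter.L b :: w),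
            dom t = (acc ++ X ++ m :: Y, (rs (Letter.L b :: w)).reverse ++ tl) := by
        rintro X Y rfl rfl
        exact ⟨_, List.mem_cons_self, by simp [dom, Aof, rs]⟩
      rcases List.append_eq_append_iff.1 hw with ⟨a, h1, h2⟩ | ⟨a, h1, h2⟩
      · cases a with
        | nil => exact first X Y (by simpa using h1.symm) (by simpa using h2)
        | cons z a =>
          obtain ⟨t, ht, h3⟩ := ih (acc ++ b) tl (z :: a) Y hb' h2 (by simp)
            (fun x hx => hXY x (by rw [h1]; exact List.mem_append_right _ hx))
          refine ⟨t, List.mem_cons_of_mem _ ht, ?_⟩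
          rw [h3, h1]
          simp [rs]
      · cases a with
        | nil => exact first X Y (by simpa using h1) (by simpa using h2.symm)
        | cons z a =>
          exfalso
          obtain ⟨x, hx, y, hy, hlt⟩ := hb b List.mem_cons_self X (z :: a) h1 hX (by simp)
          have := hXY x hx y (by rw [h2]; exact List.mem_append_left _ hy)
          omega
    | R r =>
      obtain ⟨t, ht, h3⟩ := ih acc (r :: tl) X Y hb' hw hX hXY
      exact ⟨t, ht, by rw [h3]; simp [rs]⟩

theorem pops_complete (m : ℕ) (w p : List Letter) (tl X a : List ℕ) (hp : rs p = [])
    (hw : (rs w).reverse = X ++ a) :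
    ∃ t ∈ pops m p tl w, dom t = (Aof p ++ Aof w, X ++ m :: (a ++ tl)) := by
  induction w generalizing p tl X a with
  | nil =>
    simp only [rs, List.reverse_nil] at hw
    obtain ⟨rfl, rfl⟩ := List.append_eq_nil_iff.1 hw.symm
    exact ⟨_, List.mem_singleton_self _, by simp [dom, Aof, rs, hp]⟩
  | cons x w ih =>
    cases x with
    | L b =>
      obtain ⟨t, ht, h⟩ := ih (p ++ [.L b]) tl X a (by simp [rs_append, hp, rs]) hw
      exact ⟨t, ht, by rw [h]; simp [Aof_append, Aof]⟩
    | R r =>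
      rw [rs, List.reverse_cons] at hw
      rcases List.eq_nil_or_concat a with rfl | ⟨a', z, rfl⟩
      · refine ⟨_, List.mem_cons_self, ?_⟩
        rw [List.append_nil] at hw
        rw [← hw]
        simp [dom, Aof, rs, hp, Aof_append, rs_append]
      · rw [List.concat_eq_append, ← List.append_assoc] at hw
        obtain ⟨h1, h2⟩ := List.append_inj' hw rfl
        simp only [List.cons.injEq, and_true] at h2
        subst h2
        obtain ⟨t, ht, h⟩ := ih p (r :: tl) X a' hp h1
        exact ⟨t, List.mem_cons_of_mem _ ht, by rw [h]; simp [Aof]⟩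

theorem children_complete {m : ℕ} {s : St} (h : Inv m s) :
    (∀ X Y B, dom s = (X ++ Y, B) → DD (m + 1) (X ++ m :: Y, B) →
      ∃ t ∈ children m s, dom t = (X ++ m :: Y, B)) ∧
    (∀ X Y A, dom s = (A, X ++ Y) → DD (m + 1) (A, X ++ m :: Y) →
      ∃ t ∈ children m s, dom t = (A, X ++ m :: Y)) := by
  have hdd := h.dd
  constructor
  · intro X Y B hs hd
    rw [hs] at hdd
    have hXY := (lemL hdd).1 hd
    simp only [dom, Prod.mk.injEq] at hs
    by_cases hX : X = []
    · subst hX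
      refine ⟨_, List.mem_cons_self, ?_⟩
      simp only [dom, Aof, rs, hs.1, hs.2]
      simp
    · obtain ⟨t, ht, h1⟩ := cuts_complete m s.1 [] s.2 X Y (fun b hb => (h.blk b hb).2) hs.1 hX hXY
      refine ⟨t, List.mem_cons_of_mem _ (List.mem_append_left _ ht), ?_⟩
      rw [h1, hs.2]
      simp
  · intro X Y A hs hd
    rw [hs] at hdd
    have hg := (lemR hdd).1 hd
    simp only [dom, Prod.mk.injEq] at hs
    have : ∃ a, (rs s.1).reverse = X ++ a ∧ Y = a ++ s.2 := by
      rcases List.append_eq_append_iff.1 hs.2 with ⟨a, h1, h2⟩ | ⟨a, h1, h2⟩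
      · cases a with
        | nil => exact ⟨[], by simpa using h1.symm, by simpa using h2.symm⟩
        | cons y a =>
          exfalso
          rcases h.tail y (a ++ Y) h2 with ⟨x, hx, hlt⟩ | ⟨a', c, h3, h4, h5⟩
          · have h6 := hg.1
            rw [h1, List.pairwise_append] at h6
            have := h6.2.2 x (by simpa using hx) y (by simp)
            omega
          · refine hg.2 y (by rw [h1]; simp) a' c h4 h5 ?_
            rw [← hs.1]
            exact h3
      · exact ⟨a, h1, h2⟩
    obtain ⟨a, h1, rfl⟩ := this
    obtain ⟨t, ht, h2⟩ := pops_complete m s.1 [] s.2 X a rfl h1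
    refine ⟨t, List.mem_cons_of_mem _ (List.mem_append_right _ ht), ?_⟩
    rw [h2, hs.1]
    simp [Aof]

theorem gen_complete (m : ℕ) (A B : List ℕ) (h : DD m (A, B)) : ∃ s ∈ gen m, dom s = (A, B) := by
  induction m generalizing A B with
  | zero =>
    have h1 := h.1
    simp only [List.range_zero, List.perm_nil, List.append_eq_nil_iff] at h1
    obtain ⟨rfl, rfl⟩ := h1
    exact ⟨([], []), by simp [gen], by simp [dom, Aof, rs]⟩
  | succ m ih =>
    rcases DD_succ h with ⟨X, Y, rfl, h1⟩ | ⟨X, Y, rfl, h1⟩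
    · obtain ⟨s, hs, h2⟩ := ih _ _ h1
      obtain ⟨t, ht, h3⟩ := (children_complete (gen_inv m s hs)).1 X Y B h2 h
      exact ⟨t, by rw [gen, List.mem_flatMap]; exact ⟨s, hs, ht⟩, h3⟩
    · obtain ⟨s, hs, h2⟩ := ih _ _ h1
      obtain ⟨t, ht, h3⟩ := (children_complete (gen_inv m s hs)).2 X Y A h2 h
      exact ⟨t, by rw [gen, List.mem_flatMap]; exact ⟨s, hs, ht⟩, h3⟩

/-! no repetitions -/

theorem idx_app (X Y : List ℕ) (m : ℕ) (h : m ∉ X) : (X ++ m :: Y).idxOf m = X.length := by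
  rw [List.idxOf_append_of_notMem h]
  simp

theorem cuts_idx {m : ℕ} {w : List Letter} {acc tl : List ℕ} {t : St} (h : t ∈ cuts m acc tl w)
    (hb : ∀ b, Letter.L b ∈ w → b ≠ []) (hacc : m ∉ acc) (hw : m ∉ Aof w) :
    acc.length < (Aof t.1).idxOf m := by
  obtain ⟨pre, b, rest, rfl, rfl⟩ := mem_cuts h
  have h1 := List.length_pos_of_ne_nil (hb b (by simp))
  simp only [Aof_append, Aof, List.mem_append, not_or] at hw
  have : Aof (Letter.L (acc ++ Aof pre ++ b ++ [m]) :: rest) = (acc ++ Aof pre ++ b) ++ m :: Aof rest := by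
    simp [Aof]
  simp only [this]
  rw [idx_app _ _ _ (by simp; tauto)]
  simp
  omega

theorem cuts_pw (m : ℕ) (w : List Letter) (acc tl : List ℕ)
    (hb : ∀ b, Letter.L b ∈ w → b ≠ []) (hacc : m ∉ acc) (hw : m ∉ Aof w) :
    (cuts m acc tl w).Pairwise (fun s t => (Aof s.1).idxOf m < (Aof t.1).idxOf m) := by
  induction w generalizing acc tl with
  | nil => simp [cuts]
  | cons x w ih =>
    have hb' := fun b hbw => hb b (List.mem_cons_of_mem _ hbw)
    cases x with
    | L b =>
      simp only [Aof, List.mem_append, not_or] at hw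
      have hm : m ∉ acc ++ b := by simp; tauto
      rw [cuts, List.pairwise_cons]
      refine ⟨fun t ht => ?_, ih _ _ hb' hm hw.2⟩
      have := cuts_idx ht hb' hm hw.2
      have e : Aof (Letter.L (acc ++ b ++ [m]) :: w) = (acc ++ b) ++ m :: Aof w := by simp [Aof]
      simp only [e]
      rw [idx_app _ _ _ hm]
      exact this
    | R r => exact ih _ _ hb' hacc hw

theorem pops_idx {m : ℕ} {w p : List Letter} {tl : List ℕ} {t : St} (h : t ∈ pops m p tl w)
    (hp : rs p = []) (hw : m ∉ rs w) :
    (dom t).2.idxOf m ≤ (rs w).length := by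
  obtain ⟨pre, rest, rfl, rfl⟩ := mem_pops h
  simp only [rs_append, List.mem_append, not_or] at hw
  have : (dom (Letter.R m :: (p ++ Ls pre ++ rest), (rs pre).reverse ++ tl)).2 =
      (rs rest).reverse ++ m :: ((rs pre).reverse ++ tl) := by
    simp [dom, rs, rs_append, hp, rs_Ls]
  rw [this, idx_app _ _ _ (by simp; tauto)]
  simp [rs_append]

theorem pops_pw (m : ℕ) (w p : List Letter) (tl : List ℕ) (hp : rs p = []) (hw : m ∉ rs w) :
    (pops m p tl w).Pairwise (fun s t => (dom t).2.idxOf m < (dom s).2.idxOf m) := by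
  induction w generalizing p tl with
  | nil => simp [pops]
  | cons x w ih =>
    cases x with
    | L b => exact ih _ _ (by simp [rs_append, rs, hp]) hw
    | R r =>
      have hw' : m ∉ rs w := fun h => hw (by simp [rs, h])
      rw [pops, List.pairwise_cons]
      refine ⟨fun t ht => ?_, ih _ _ hp hw'⟩
      have h1 := pops_idx ht hp hw'
      have : (dom (Letter.R m :: (p ++ Letter.R r :: w), tl)).2 =
          (rs (Letter.R r :: w)).reverse ++ m :: tl := by
        simp [dom, rs, rs_append, hp]
      rw [this, idx_app _ _ _ (by simpa using hw)]
      simp [rs]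
      omega

theorem children_nodup {m : ℕ} {s : St} (h : Inv m s) : ((children m s).map dom).Nodup := by
  obtain ⟨f1, f2, f3⟩ := h.fresh
  have hb := fun b hb => (h.blk b hb).1
  rw [List.Nodup, List.pairwise_map, children, List.pairwise_cons, List.pairwise_append]
  have hpop : ∀ t ∈ pops m [] s.2 s.1, m ∉ (dom t).1 := by
    intro t ht
    obtain ⟨pre, rest, hw, rfl⟩ := mem_pops ht
    simpa [dom, Aof, Aof_append, Aof_Ls, hw] using f1
  refine ⟨fun t ht heq => ?_, ?_, ?_, ?_⟩
  · rcases List.mem_append.1 ht with ht | ht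
    · have := cuts_idx ht hb (by simp) f1
      change _ < (dom t).1.idxOf m at this
      rw [← heq] at this
      simp [dom, Aof] at this
    · have := hpop t ht
      rw [← heq] at this
      simp [dom, Aof] at this
  · refine (cuts_pw m s.1 [] s.2 hb (by simp) f1).imp ?_
    intro a b hab heq
    change (dom a).1.idxOf m < (dom b).1.idxOf m at hab
    rw [heq] at hab
    exact hab.false
  · refine (pops_pw m s.1 [] s.2 rfl f2).imp ?_
    intro a b hab heq
    rw [heq] at hab
    exact hab.false
  · intro a ha b hb heq
    apply hpop b hb
    rw [← heq]
    obtain ⟨pre, b, rest, hw, rfl⟩ := mem_cuts ha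
    simp [dom, Aof]

theorem filter_fresh {l : List ℕ} {m : ℕ} (h : m ∉ l) : l.filter (· ≠ m) = l := by
  rw [List.filter_eq_self]
  intro a ha
  simp
  rintro rfl
  exact h ha

theorem child_erase {m : ℕ} {s t : St} (h : Inv m s) (ht : t ∈ children m s) :
    ((dom t).1.filter (· ≠ m), (dom t).2.filter (· ≠ m)) = dom s := by
  obtain ⟨f1, f2, f3⟩ := h.fresh
  obtain ⟨w, tl⟩ := s
  have g1 := filter_fresh f1
  have g2 := filter_fresh f2
  have g3 := filter_fresh f3
  dsimp only at g1 g2 g3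
  rw [children, List.mem_cons, List.mem_append] at ht
  rcases ht with rfl | ht | ht
  · refine Prod.ext ?_ ?_
    · change ([m] ++ Aof w).filter (· ≠ m) = Aof w
      rw [List.filter_append, g1]
      simp
    · change ((rs w).reverse ++ tl).filter (· ≠ m) = (rs w).reverse ++ tl
      rw [List.filter_append, List.filter_reverse, g2, g3]
  · obtain ⟨pre, b, rest, hw, rfl⟩ := mem_cuts ht
    have hw : w = _ := hw
    subst hw
    have e1 : (dom (Letter.L ([] ++ Aof pre ++ b ++ [m]) :: rest, (rs pre).reverse ++ tl)).2 =
      (rs (pre ++ Letter.L b :: rest)).reverse ++ tl := by simp [dom, rs, rs_append]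
    dsimp only at e1 ⊢
    rw [e1, List.filter_append, List.filter_reverse, g2, g3]
    refine Prod.ext ?_ rfl
    have e2 : dom (pre ++ Letter.L b :: rest, tl) =
      (Aof (pre ++ Letter.L b :: rest), (rs (pre ++ Letter.L b :: rest)).reverse ++ tl) := rfl
    rw [e2]
    dsimp only
    refine Eq.trans ?_ g1
    simp [dom, Aof, Aof_append]
  · obtain ⟨pre, rest, hw, rfl⟩ := mem_pops ht
    have hw : w = _ := hw
    subst hw
    have e1 : (dom (Letter.R m :: ([] ++ Ls pre ++ rest), (rs pre).reverse ++ tl)).1 =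
      Aof (pre ++ rest) := by simp [dom, Aof, Aof_append, Aof_Ls]
    dsimp only at e1 ⊢
    rw [e1, g1]
    refine Prod.ext rfl ?_
    have e2 : dom (pre ++ rest, tl) = (Aof (pre ++ rest), (rs (pre ++ rest)).reverse ++ tl) := rfl
    rw [e2]
    dsimp only
    have e3 : ((rs (pre ++ rest)).reverse ++ tl).filter (· ≠ m) = (rs (pre ++ rest)).reverse ++ tl := by
      rw [List.filter_append, List.filter_reverse, g2, g3]
    refine Eq.trans ?_ e3
    simp [dom, rs, rs_append, rs_Ls]

theorem gen_nodup (m : ℕ) : ((gen m).map dom).Nodup := by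
  induction m with
  | zero => simp [gen]
  | succ m ih =>
    rw [gen, List.map_flatMap, List.nodup_flatMap]
    refine ⟨fun s hs => children_nodup (gen_inv m s hs), ?_⟩
    rw [List.Nodup, List.pairwise_map] at ih
    refine List.Pairwise.imp_of_mem ?_ ih
    intro s t hs ht hne
    rw [Function.onFun, List.disjoint_left]
    intro e he1 he2
    obtain ⟨u, hu, rfl⟩ := List.mem_map.1 he1
    obtain ⟨v, hv, he⟩ := List.mem_map.1 he2
    apply hne
    rw [← child_erase (gen_inv m s hs) hu, ← child_erase (gen_inv m t ht) hv, he]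

theorem card_DD (m : ℕ) : {d | DD m d}.ncard = fcount m [0] := by
  have : {d | DD m d} = (((gen m).map dom).toFinset : Set (List ℕ × List ℕ)) := by
    ext d
    obtain ⟨A, B⟩ := d
    simp only [Set.mem_ofPred_eq, List.coe_toFinset, List.mem_map]
    constructor
    · exact gen_complete m A B
    · rintro ⟨s, hs, h⟩
      rw [← h]
      exact (gen_inv m s hs).dd
  rw [this, Set.ncard_coe_finset, List.toFinset_card_of_nodup (gen_nodup m), List.length_map,
    length_gen]

end Dom

namespace Dom
open scoped List

def Avoid (l : List ℕ) : Prop := ∀ a b c d, a < b → b < c → c < d → ¬ [a, c, b, d] <+ l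

def TT (N : ℕ) : Set (List ℕ) :=
  {l | l.Perm (List.range (N + 2)) ∧ Avoid l ∧ ∃ A B, l = A ++ 0 :: (N + 1) :: B}

def GG (N : ℕ) (d : List ℕ × List ℕ) : List ℕ :=
  d.1.map Nat.succ ++ 0 :: (N + 1) :: d.2.map Nat.succ

theorem GG_inj (N : ℕ) : Function.Injective (GG N) := by
  have aux : ∀ A B A' B' : List ℕ, A.map Nat.succ ++ 0 :: B = A'.map Nat.succ ++ 0 :: B' →
      A = A' ∧ B = B' := by
    intro A B A'
    induction A generalizing A' with
    | nil =>
      intro B' h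
      cases A' with
      | nil => simpa using h
      | cons x A' => simp at h
    | cons y A ih =>
      intro B' h
      cases A' with
      | nil => simp at h
      | cons x A' =>
        simp only [List.map_cons, List.cons_append, List.cons.injEq, Nat.succ.injEq] at h
        obtain ⟨h1, h2⟩ := ih A' B' h.2
        exact ⟨by rw [h.1, h1], h2⟩
  rintro ⟨A, B⟩ ⟨A', B'⟩ h
  obtain ⟨h1, h2⟩ := aux _ _ _ _ h
  simp only [List.cons.injEq, true_and] at h2
  have h1 : A = A' := h1
  rw [h1, List.map_injective_iff.2 Nat.succ_injective h2]

theorem GG_perm (N : ℕ) (A B : List ℕ) :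
    (GG N (A, B)).Perm (List.range (N + 2)) ↔ (A ++ B).Perm (List.range N) := by
  have h1 : (GG N (A, B)).Perm (0 :: (N + 1) :: (A ++ B).map Nat.succ) := by
    rw [GG]
    refine List.perm_middle.trans (List.Perm.cons _ (List.perm_middle.trans ?_))
    rw [List.map_append]
  have h2 : (List.range (N + 2)).Perm (0 :: (N + 1) :: (List.range N).map Nat.succ) := by
    rw [List.range_succ_eq_map, List.range_succ, List.map_append]
    exact List.Perm.cons _ List.perm_append_comm
  rw [h1.congr_left, h2.congr_right, List.perm_cons, List.perm_cons,
    List.map_perm_map_iff Nat.succ_injective]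

theorem GG_avoid (N : ℕ) (A B : List ℕ) (hA : ∀ x ∈ A, x < N) (hB : ∀ x ∈ B, x < N) :
    Avoid (GG N (A, B)) ↔ Valid A B := by
  have sA : ∀ {l L : List ℕ}, l <+ L → l.map Nat.succ <+ L.map Nat.succ := fun h => h.map _
  constructor
  · intro h
    refine ⟨fun a b c h1 h2 h3 => ?_, fun a b c h1 h2 h3 => ?_, fun a b c d h1 h2 h3 h4 h5 => ?_⟩
    · refine h (a + 1) (b + 1) (c + 1) (N + 1) (by omega) (by omega) ?_ ?_
      · have := hA c (h3.subset (by simp)); omega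
      · have : [a, c, b].map Nat.succ ++ [N + 1] <+ GG N (A, B) :=
          (sA h3).append (((List.nil_sublist _).cons_cons _).cons _)
        exact this
    · refine h 0 (a + 1) (b + 1) (c + 1) (by omega) (by omega) (by omega) ?_
      have : [] ++ 0 :: [b, a, c].map Nat.succ <+ GG N (A, B) :=
        (List.nil_sublist _).append (((sA h3).cons _).cons_cons _)
      exact this
    · refine h (a + 1) (b + 1) (c + 1) (d + 1) (by omega) (by omega) (by omega) ?_
      have : [a, c].map Nat.succ ++ [b, d].map Nat.succ <+ GG N (A, B) :=
        (sA h4).append (((sA h5).cons _).cons _)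
      exact this
  · intro h a b c d h1 h2 h3 h4
    have d2 : ∀ {x y : ℕ} {L : List ℕ}, [x, y] <+ L.map Nat.succ →
        ∃ x' y', x = x' + 1 ∧ y = y' + 1 ∧ [x', y'] <+ L := by
      intro x y L hL
      obtain ⟨l, hl, he⟩ := List.sublist_map_iff.1 hL
      match l, he with
      | [x', y'], he =>
        simp at he
        exact ⟨x', y', he.1, he.2, hl⟩
    have d3 : ∀ {x y z : ℕ} {L : List ℕ}, [x, y, z] <+ L.map Nat.succ →
        ∃ x' y' z', x = x' + 1 ∧ y = y' + 1 ∧ z = z' + 1 ∧ [x', y', z'] <+ L := by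
      intro x y z L hL
      obtain ⟨l, hl, he⟩ := List.sublist_map_iff.1 hL
      match l, he with
      | [x', y', z'], he =>
        simp at he
        exact ⟨x', y', z', he.1, he.2.1, he.2.2, hl⟩
    have hd : d ≤ N + 1 := by
      have hm := h4.subset (a := d) (by simp)
      simp only [GG, List.mem_append, List.mem_map, List.mem_cons] at hm
      rcases hm with ⟨x, hx, rfl⟩ | rfl | rfl | ⟨x, hx, rfl⟩
      · have := hA x hx; omega
      · omega
      · omega
      · have := hB x hx; omega
    have c132 : ¬ [a, c, b] <+ A.map Nat.succ := by
      intro h5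
      obtain ⟨x, y, z, rfl, rfl, rfl, h6⟩ := d3 h5
      exact h.1 x z y (by omega) (by omega) h6
    have c213 : ¬ [c, b, d] <+ (N + 1) :: B.map Nat.succ := by
      intro h5
      rcases List.sublist_cons_iff.1 h5 with h5 | ⟨r, h6, -⟩
      · obtain ⟨x, y, z, rfl, rfl, rfl, h6⟩ := d3 h5
        exact h.2.1 y x z (by omega) (by omega) h6
      · simp at h6; omega
    rw [GG] at h4
    obtain ⟨l1, l2, he, s1, s2⟩ := List.sublist_append_iff.1 h4
    dsimp only at s1 s2
    match l1, he with
    | [], he =>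
      rw [List.nil_append] at he
      subst he
      exact c213 s2.of_cons_cons
    | [x], he =>
      simp only [List.cons_append, List.nil_append, List.cons.injEq] at he
      obtain ⟨rfl, rfl⟩ := he
      rcases List.sublist_cons_iff.1 s2 with h5 | ⟨r, h6, -⟩
      · exact c213 h5
      · simp at h6; omega
    | [x, y], he =>
      simp only [List.cons_append, List.nil_append, List.cons.injEq] at he
      obtain ⟨rfl, rfl, rfl⟩ := he
      rcases List.sublist_cons_iff.1 s2 with h5 | ⟨r, h6, -⟩
      · rcases List.sublist_cons_iff.1 h5 with h5 | ⟨r, h6, -⟩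
        · obtain ⟨x, y, rfl, rfl, h6⟩ := d2 h5
          obtain ⟨z, w, rfl, rfl, h7⟩ := d2 s1
          exact h.2.2 z x w y (by omega) (by omega) (by omega) h7 h6
        · simp at h6; omega
      · simp at h6; omega
    | x :: y :: z :: l, he =>
      simp only [List.cons_append, List.cons.injEq] at he
      obtain ⟨rfl, rfl, rfl, he⟩ := he
      refine c132 (List.Sublist.trans ?_ s1)
      simp

theorem GG_image (N : ℕ) : GG N '' {d | DD N d} = TT N := by
  ext l
  constructor
  · rintro ⟨⟨A, B⟩, hd, rfl⟩
    have hd : DD N (A, B) := hd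
    exact ⟨(GG_perm N A B).2 hd.1,
      (GG_avoid N A B (fun x hx => hd.lt (Or.inl hx)) (fun x hx => hd.lt (Or.inr hx))).2 hd.2,
      _, _, rfl⟩
  · rintro ⟨hp, hv, A', B', rfl⟩
    have hn := hp.nodup_iff.2 List.nodup_range
    have e : ∀ L : List ℕ, 0 ∉ L → (L.map Nat.pred).map Nat.succ = L := by
      intro L hL
      rw [List.map_map]
      conv_rhs => rw [← List.map_id L]
      refine List.map_congr_left fun x hx => ?_
      have : x ≠ 0 := by rintro rfl; exact hL hx
      simp
      omega
    have hA : 0 ∉ A' := by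
      intro h0
      have := (List.nodup_append.1 hn).2.2 0 h0 0 (by simp)
      exact this rfl
    have hB : 0 ∉ B' := by
      intro h0
      have := (List.nodup_cons.1 (List.nodup_append.1 hn).2.1).1
      simp [h0] at this
    have hG : GG N (A'.map Nat.pred, B'.map Nat.pred) = A' ++ 0 :: (N + 1) :: B' := by
      rw [GG]
      dsimp only
      rw [e _ hA, e _ hB]
    refine ⟨(A'.map Nat.pred, B'.map Nat.pred), ?_, hG⟩
    rw [← hG] at hp hv
    have h1 := (GG_perm _ _ _).1 hp
    have hlt : ∀ x, x ∈ A'.map Nat.pred ++ B'.map Nat.pred → x < N := by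
      intro x hx
      have := h1.mem_iff.1 hx
      simpa using this
    exact ⟨h1, (GG_avoid N _ _ (fun x hx => hlt x (List.mem_append_left _ hx))
      (fun x hx => hlt x (List.mem_append_right _ hx))).1 hv⟩

def FF {n : ℕ} (σ : Equiv.Perm (Fin n)) : List ℕ := List.ofFn (fun i => (σ i : ℕ))

theorem FF_inj (n : ℕ) : Function.Injective (FF (n := n)) := by
  intro σ τ h
  have := List.ofFn_injective h
  ext i
  exact congrFun this i

theorem FF_avoid {n : ℕ} (σ : Equiv.Perm (Fin n)) : Avoids1324 σ ↔ Avoid (FF σ) := by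
  rw [FF, List.ofFn_eq_map]
  constructor
  · intro h a b c d h1 h2 h3 h4
    obtain ⟨l, hl, he⟩ := List.sublist_map_iff.1 h4
    match l, he with
    | [i, j, k, m], he =>
      have hs := (List.pairwise_lt_finRange n).sublist hl
      simp at hs
      simp at he
      obtain ⟨rfl, rfl, rfl, rfl⟩ := he
      exact h ⟨i, j, k, m, hs.1.1, hs.2.1.1, hs.2.2, h1, h2, h3⟩
  · rintro h ⟨i, j, k, m, h1, h2, h3, h4, h5, h6⟩
    refine h (σ i) (σ k) (σ j) (σ m) h4 h5 h6 ?_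
    have : [i, j, k, m] <+ List.finRange n := by
      have hp : List.Pairwise (· < ·) [i, j, k, m] := by
        simp
        refine ⟨⟨h1, ?_, ?_⟩, ⟨h2, ?_⟩, h3⟩ <;> omega
      refine List.sublist_of_subperm_of_pairwise (r := (· < ·)) ?_ hp (List.pairwise_lt_finRange n)
      refine List.subperm_of_subset (hp.imp fun h => h.ne) ?_
      intro x _
      simp
    exact this.map (fun i => (σ i : ℕ))

theorem FF_perm {n : ℕ} (σ : Equiv.Perm (Fin n)) : (FF σ).Perm (List.range n) := by
  rw [List.perm_ext_iff_of_nodup _ List.nodup_range]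
  · intro a
    simp only [FF, List.mem_ofFn, List.mem_range]
    constructor
    · rintro ⟨i, rfl⟩
      exact (σ i).2
    · intro h
      exact ⟨σ.symm ⟨a, h⟩, by simp⟩
  · rw [FF, List.nodup_ofFn]
    intro i j h
    exact σ.injective (Fin.ext h)

theorem FF_getElem {n : ℕ} (σ : Equiv.Perm (Fin n)) (i : ℕ) (h : i < (FF σ).length) (h' : i < n) :
    (FF σ)[i] = (σ ⟨i, h'⟩ : ℕ) := by
  simp only [FF, List.getElem_ofFn]

theorem FF_image (N : ℕ) : FF '' (SPerm (N + 2) 1 1) = TT N := by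
  ext l
  constructor
  · rintro ⟨σ, ⟨h1, hn, ha, h2, -⟩, rfl⟩
    refine ⟨FF_perm σ, (FF_avoid σ).1 h1, ?_⟩
    generalize hi : σ.symm ⟨1 - 1, ha⟩ = i at h2
    generalize hj : σ.symm ⟨N + 2 - 1, hn⟩ = j at h2
    rw [Equiv.symm_apply_eq] at hi hj
    have hlen : (FF σ).length = N + 2 := by simp [FF]
    have hi1 : (i : ℕ) < (FF σ).length := by rw [hlen]; exact i.2
    have hj1 : (i : ℕ) + 1 < (FF σ).length := by rw [hlen, ← h2]; exact j.2
    refine ⟨(FF σ).take i, (FF σ).drop (i + 1 + 1), ?_⟩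
    have e1 : (FF σ)[(i : ℕ)] = 0 := by
      rw [FF_getElem σ i hi1 i.2, Fin.eta, ← hi]
    have e2 : (FF σ)[(i : ℕ) + 1] = N + 1 := by
      have : (⟨(i : ℕ) + 1, by rw [← h2]; exact j.2⟩ : Fin (N + 2)) = j := Fin.ext h2.symm
      rw [FF_getElem σ _ hj1 (by rw [← h2]; exact j.2), this, ← hj]
      simp
    conv_lhs => rw [← List.take_append_drop i (FF σ), List.drop_eq_getElem_cons hi1,
      List.drop_eq_getElem_cons hj1, e1, e2]
  · rintro ⟨hp, hv, A, B, hl⟩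
    have hlen : l.length = N + 2 := by simpa using hp.length_eq
    have hn := hp.nodup_iff.2 List.nodup_range
    let f : Fin (N + 2) → Fin (N + 2) := fun i => ⟨l[(i : ℕ)]'(by rw [hlen]; exact i.2), by
      have := hp.mem_iff.1 (List.getElem_mem (l := l) (n := i) (by rw [hlen]; exact i.2))
      simpa using this⟩
    have hf : Function.Injective f := by
      intro i j hij
      have : l[(i : ℕ)]'(by rw [hlen]; exact i.2) = l[(j : ℕ)]'(by rw [hlen]; exact j.2) :=
        congrArg Fin.val hij
      exact Fin.ext ((hn.getElem_inj_iff).1 this)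
    let σ : Equiv.Perm (Fin (N + 2)) := Equiv.ofBijective f (Finite.injective_iff_bijective.1 hf)
    have hσ : ∀ i, ((σ i : Fin (N + 2)) : ℕ) = l[(i : ℕ)]'(by rw [hlen]; exact i.2) := fun i => rfl
    have hF : FF σ = l := by
      refine List.ext_getElem (by simp [FF, hlen]) ?_
      intro i h1 h2
      rw [FF_getElem σ i h1 (by rw [← hlen]; exact h2), hσ]
    refine ⟨σ, ⟨(FF_avoid σ).2 (by rw [hF]; exact hv), by omega, by omega, ?_, ?_⟩, hF⟩
    · have hl2 : A.length + 1 < N + 2 := by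
        rw [← hlen, hl]; simp
      have a1 : σ.symm ⟨1 - 1, by omega⟩ = ⟨A.length, by omega⟩ := by
        rw [Equiv.symm_apply_eq]
        apply Fin.ext
        rw [hσ]
        simp [hl]
      have a2 : σ.symm ⟨N + 2 - 1, by omega⟩ = ⟨A.length + 1, by omega⟩ := by
        rw [Equiv.symm_apply_eq]
        apply Fin.ext
        rw [hσ]
        simp [hl]
      rw [a1, a2]
    · intro b hb
      omega

theorem card_SPerm (N : ℕ) : (SPerm (N + 2) 1 1).ncard = fcount N [0] := by
  rw [← card_DD, ← Set.ncard_image_of_injective _ (GG_inj N), GG_image, ← FF_image,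
    Set.ncard_image_of_injective _ (FF_inj _)]

end Dom
/-- with `a_{n,1}` the number of 1324-avoiding permutations of `{1,…,n}`
having the `n` immediately to the right of the `1`, we have
`n! ⬝ (2n-1)! ⬝ a_{n,1} = 2 ⬝ (3n-3)!`. -/
theorem stmt_2 (n : ℕ) (hn : 2 ≤ n) :
    Nat.factorial n * Nat.factorial (2 * n - 1) * (SPerm n 1 1).ncard =
      2 * Nat.factorial (3 * n - 3) := by
  obtain ⟨N, rfl⟩ : ∃ N, n = N + 2 := ⟨n - 2, by omega⟩
  rw [Dom.card_SPerm, show 2 * (N + 2) - 1 = 2 * N + 3 by omega,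
    show 3 * (N + 2) - 3 = 3 * N + 3 by omega]
  exact Dom.fcount_closed N
end

section
/- Let n ≥ 3, k ≥ 2, and let σ ∈ S_{n,k}^{1≺n}(1324). Then there exist a unique integer m with 2 ≤ m ≤ n−1, a unique primitive σ₁ ∈ S_{m,1}^{1≺m}(1324), and a unique σ₂ ∈ S_{ℓ,k−1}^{1≺ℓ}(1324) with ℓ = n−m+1, such that σ = σ₁ ⊙ σ₂, i.e., σ in one-line notation is the concatenation π̂₂ π₁ 1 m θ̂₂ n τ̂₂ τ₁, where σ₁ = π₁ · (1) · (m) · τ₁, σ₂ = π₂ · (1) · θ₂ · (ℓ) · τ₂ (with π₂ the prefix of σ₂ before its entry 1, θ₂ the word strictly between its entries 1 and ℓ, τ₂ the suffix after its entry ℓ), and π̂₂, θ̂₂, τ̂₂ are obtained from π₂, θ₂, τ₂ by increasing every entry by m−1. -/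
/-- One-line notation of a permutation, as a list of 1-based values. -/
def word {n : ℕ} (σ : Equiv.Perm (Fin n)) : List ℕ :=
  List.ofFn fun i => (σ i : ℕ) + 1

def IsW (n : ℕ) (L : List ℕ) : Prop := L.Nodup ∧ ∀ x, x ∈ L ↔ 1 ≤ x ∧ x ≤ n

def LAv (L : List ℕ) : Prop :=
  ∀ a b c d, [a, b, c, d].Sublist L → a < c → c < b → b < d → False

theorem word_isW {n : ℕ} (σ : Equiv.Perm (Fin n)) : IsW n (word σ) := by
  constructor
  · unfold word
    rw [List.nodup_ofFn]
    intro i j h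
    apply σ.injective
    apply Fin.ext
    simpa using h
  · intro x
    unfold word
    rw [List.mem_ofFn]
    constructor
    · rintro ⟨i, rfl⟩
      have := (σ i).isLt
      omega
    · rintro ⟨h1, h2⟩
      refine ⟨σ.symm ⟨x - 1, by omega⟩, ?_⟩
      simp
      omega

theorem word_inj {n : ℕ} {σ τ : Equiv.Perm (Fin n)} (h : word σ = word τ) : σ = τ := by
  unfold word at h
  have := List.ofFn_injective h
  ext i
  have := congrFun this i
  simpa using this

theorem IsW.length {n : ℕ} {L : List ℕ} (h : IsW n L) : L.length = n := by
  have : L.Perm (List.range' 1 n) := by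
    rw [List.perm_ext_iff_of_nodup h.1 List.nodup_range']
    intro x
    rw [h.2, List.mem_range'_1]
    omega
  simpa using this.length_eq

theorem word_surj {n : ℕ} {L : List ℕ} (h : IsW n L) :
    ∃ σ : Equiv.Perm (Fin n), word σ = L := by
  have hl := h.length
  have hm : ∀ i : Fin n, 1 ≤ L[i.1]'(by omega) ∧ L[i.1]'(by omega) ≤ n := fun i =>
    (h.2 _).1 (List.getElem_mem _)
  let f : Fin n → Fin n := fun i => ⟨L[i.1]'(by omega) - 1, by have := hm i; omega⟩
  have hf : Function.Injective f := by
    intro i j hij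
    have h1 := congrArg Fin.val hij
    simp only [f] at h1
    have := hm i
    have := hm j
    have h2 : L[i.1]'(by omega) = L[j.1]'(by omega) := by omega
    exact Fin.ext ((h.1.getElem_inj_iff).1 h2)
  refine ⟨Equiv.ofBijective f (Finite.injective_iff_bijective.1 hf), ?_⟩
  unfold word
  apply List.ext_getElem
  · simp [hl]
  · intro i h1 h2
    have := hm ⟨i, by omega⟩
    simp [f] at this ⊢
    omega

theorem avoids_iff {n : ℕ} (σ : Equiv.Perm (Fin n)) : Avoids1324 σ ↔ LAv (word σ) := by
  have hl : (word σ).length = n := by simp [word]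
  constructor
  · intro h a b c d hs h1 h2 h3
    obtain ⟨f, hf⟩ := List.sublist_iff_exists_fin_orderEmbedding_get_eq.1 hs
    apply h
    have key : ∀ i : Fin [a, b, c, d].length,
        [a, b, c, d].get i = (σ (Fin.cast hl (f i)) : ℕ) + 1 := by
      intro i
      rw [hf i]
      simp [word]
      rfl
    have k0 : a = _ := key ⟨0, by simp⟩
    have k1 : b = _ := key ⟨1, by simp⟩
    have k2 : c = _ := key ⟨2, by simp⟩
    have k3 : d = _ := key ⟨3, by simp⟩
    have m1 := f.strictMono (a := ⟨0, by simp⟩) (b := ⟨1, by simp⟩) (by simp)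
    have m2 := f.strictMono (a := ⟨1, by simp⟩) (b := ⟨2, by simp⟩) (by simp)
    have m3 := f.strictMono (a := ⟨2, by simp⟩) (b := ⟨3, by simp⟩) (by simp)
    refine ⟨Fin.cast hl _, Fin.cast hl _, Fin.cast hl _, Fin.cast hl _, m1, m2, m3, ?_, ?_, ?_⟩ <;> rw [Fin.lt_def] <;> omega
  · rintro h ⟨i, j, k, l, h1, h2, h3, h4, h5, h6⟩
    refine h ((σ i : ℕ) + 1) ((σ j : ℕ) + 1) ((σ k : ℕ) + 1) ((σ l : ℕ) + 1) ?_
      (by simpa using h4) (by simpa using h5) (by simpa using h6)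
    have e : ∀ i : Fin n, (σ i : ℕ) + 1 = (word σ)[i.1]'(by omega) := by
      intro i; simp [word]
    have hp : List.Pairwise (· < ·) [i, j, k, l] := by
      simp; omega
    have := hp.map (S := (· < ·)) (Fin.cast hl.symm) (by intro a b h; exact h)
    have := List.map_getElem_sublist this
    simp only [List.map_cons, List.map_nil, Fin.getElem_fin, Fin.val_cast, ← e] at this
    exact this

theorem sperm_iff {n k : ℕ} (hn : 1 ≤ n) (hk : 1 ≤ k) (σ : Equiv.Perm (Fin n)) :
    σ ∈ SPerm n 1 k ↔ LAv (word σ) ∧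
      ∃ π θ τ : List ℕ, word σ = π ++ 1 :: (θ ++ n :: τ) ∧ θ.length + 1 = k := by
  have hl : (word σ).length = n := by simp [word]
  have hw := word_isW σ
  have e : ∀ i : Fin n, (word σ)[i.1]'(by omega) = (σ i : ℕ) + 1 := by
    intro i; simp [word]
  have e' : ∀ x (hx : x < n), (word σ)[(σ.symm ⟨x, hx⟩ : ℕ)]'(by omega) = x + 1 := by
    intro i hi; rw [e]; simp
  have idx : ∀ (i : ℕ) (hi : i < (word σ).length) x (hx : x < n),
      (word σ)[i] = x + 1 → (σ.symm ⟨x, hx⟩ : ℕ) = i := by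
    intro i hi x hx h
    rw [← e' x hx] at h
    exact (hw.1.getElem_inj_iff.1 h).symm
  unfold SPerm
  rw [Set.mem_ofPred_eq, avoids_iff]
  refine and_congr_right fun _ => ?_
  constructor
  · rintro ⟨h1, h0, h, -⟩
    have a0 := e' _ h0
    have a1 := e' _ h1
    have hlt : (σ.symm ⟨1 - 1, h0⟩ : ℕ) + k < n := by rw [← h]; exact Fin.isLt _
    replace a1 : (word σ)[(σ.symm ⟨1 - 1, h0⟩ : ℕ) + k]'(hl.symm ▸ hlt) = n - 1 + 1 := by
      rw [← a1]
      congr 1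
      exact h.symm
    obtain ⟨p, hlt, a0, a1⟩ : ∃ p, ∃ hlt : p + k < (word σ).length,
        (word σ)[p]'(by omega) = 1 - 1 + 1 ∧ (word σ)[p + k] = n - 1 + 1 :=
      ⟨_, hl.symm ▸ hlt, a0, a1⟩
    refine ⟨(word σ).take p, ((word σ).drop (p + 1)).take (k - 1), (word σ).drop (p + k + 1), ?_, ?_⟩
    · conv_lhs => rw [← List.take_append_drop p (word σ)]
      congr 1
      rw [List.drop_eq_getElem_cons (by omega), a0]
      simp only [Nat.sub_self, Nat.zero_add]
      congr 1
      conv_lhs => rw [← List.take_append_drop (k - 1) (List.drop (p + 1) (word σ))]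
      congr 1
      rw [List.drop_drop, show p + 1 + (k - 1) = p + k by omega,
        List.drop_eq_getElem_cons (by omega), a1]
      congr 1
      omega
    · simp; omega
  · rintro ⟨π, θ, τ, h, hk⟩
    have hlen := congrArg List.length h
    simp at hlen
    refine ⟨by omega, by omega, ?_, by intro b hb; omega⟩
    have i1 := idx π.length (by omega) (1 - 1) (by omega) (by simp [h])
    have i2 := idx (π.length + k) (by omega) (n - 1) (by omega) ?_
    · rw [i1, i2]
    subst hk
    simp only [h]
    rw [List.getElem_append_right (by omega)]
    simp
    omega

theorem split_unique {x : ℕ} : ∀ {A B A' B' : List ℕ}, (A ++ x :: B).Nodup →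
    A ++ x :: B = A' ++ x :: B' → A = A' ∧ B = B'
  | [], B, [], B', _, h => by simpa using h
  | [], B, a :: A', B', hn, h => by
    simp at h hn
    obtain ⟨rfl, rfl⟩ := h
    simp at hn
  | a :: A, B, [], B', hn, h => by
    simp at h hn
    obtain ⟨rfl, rfl⟩ := h
    simp at hn
  | a :: A, B, a' :: A', B', hn, h => by
    simp only [List.cons_append, List.nodup_cons, List.cons.injEq] at h hn
    obtain ⟨h1, h2⟩ := split_unique hn.2 h.2
    simp [h.1, h1, h2]

theorem split_filter {m : ℕ} : ∀ {L : List ℕ}, m ∉ L →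
    (∀ s b, [s, b].Sublist L → s < m → m < b → False) →
    L = L.filter (m < ·) ++ L.filter (· < m)
  | [], _, _ => by simp
  | a :: L, hm, h => by
    have ih := split_filter (m := m) (L := L) (by simp at hm; exact hm.2)
      (fun s b hs => h s b (hs.cons a))
    have ha : a ≠ m := by rintro rfl; simp at hm
    rcases lt_or_gt_of_ne ha with h1 | h1
    · have h2 : ∀ b ∈ L, b < m := by
        intro b hb
        by_contra hc
        have hbm : b ≠ m := by rintro rfl; simp [hb] at hm
        exact h a b (by simpa using hb) h1 (by omega)
      have h3 : L.filter (m < ·) = [] := by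
        rw [List.filter_eq_nil_iff]
        intro b hb
        have := h2 b hb
        simp; omega
      have h4 : L.filter (· < m) = L := by
        rw [List.filter_eq_self]
        intro b hb
        have := h2 b hb
        simp; omega
      simp [h1, h3, h4, not_lt_of_gt h1]
    · simp only [List.filter_cons, h1, not_lt_of_gt h1]
      simpa using ih

/-- shape of the factors in terms of the word -/
theorem factors {n m : ℕ} {w w1 w2 π₁ τ₁ π₂ θ₂ τ₂ : List ℕ} (hm : 2 ≤ m) (hmn : m ≤ n - 1)
    (h1 : IsW m w1) (h2 : IsW (n - m + 1) w2)
    (e1 : w1 = π₁ ++ 1 :: m :: τ₁) (e2 : w2 = π₂ ++ 1 :: (θ₂ ++ (n - m + 1) :: τ₂))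
    (e : w = π₂.map (· + (m - 1)) ++ π₁ ++ 1 :: m ::
          (θ₂.map (· + (m - 1)) ++ n :: (τ₂.map (· + (m - 1)) ++ τ₁))) :
    w.filter (· ≤ m) = w1 ∧ w.filter (m ≤ ·) = w2.map (· + (m - 1)) := by
  have b1 : ∀ x ∈ w1, 1 ≤ x ∧ x ≤ m := fun x hx => (h1.2 x).1 hx
  have b2 : ∀ x ∈ w2, 1 ≤ x ∧ x ≤ n - m + 1 := fun x hx => (h2.2 x).1 hx
  have n1 := h1.1
  have n2 := h2.1
  rw [e1] at b1 n1
  rw [e2] at b2 n2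
  have hπ₁ : ∀ x ∈ π₁, x < m := by
    intro x hx
    have := b1 x (by simp [hx])
    have : x ≠ m := by rintro rfl; simp [List.nodup_append] at n1; grind
    omega
  have hτ₁ : ∀ x ∈ τ₁, x < m := by
    intro x hx
    have := b1 x (by simp [hx])
    have : x ≠ m := by rintro rfl; simp [List.nodup_append] at n1; grind
    omega
  have hπ₂ : ∀ x ∈ π₂, 1 < x := by
    intro x hx
    have := b2 x (by simp [hx])
    have : x ≠ 1 := by rintro rfl; simp [List.nodup_append] at n2; grind
    omega
  have hθ₂ : ∀ x ∈ θ₂, 1 < x := by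
    intro x hx
    have := b2 x (by simp [hx])
    have : x ≠ 1 := by rintro rfl; simp [List.nodup_append] at n2; grind
    omega
  have hτ₂ : ∀ x ∈ τ₂, 1 < x := by
    intro x hx
    have := b2 x (by simp [hx])
    have : x ≠ 1 := by rintro rfl; simp [List.nodup_append] at n2; grind
    omega
  have low : ∀ L : List ℕ, (∀ x ∈ L, x < m) →
      L.filter (· ≤ m) = L ∧ L.filter (m ≤ ·) = [] := by
    intro L hL
    rw [List.filter_eq_nil_iff, List.filter_eq_self]
    constructor <;> intro x hx <;> have := hL x hx <;> simp <;> omega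
  have high : ∀ L : List ℕ, (∀ x ∈ L, 1 < x) →
      (L.map (· + (m - 1))).filter (· ≤ m) = [] ∧
      (L.map (· + (m - 1))).filter (m ≤ ·) = L.map (· + (m - 1)) := by
    intro L hL
    rw [List.filter_eq_nil_iff, List.filter_eq_self]
    constructor <;> intro y hy <;> obtain ⟨x, hx, rfl⟩ := List.mem_map.1 hy <;>
      have := hL x hx <;> simp <;> omega
  have q1 : ¬ n ≤ m := by omega
  have q2 : m ≤ n := by omega
  have q3 : 1 ≤ m := by omega
  have q4 : ¬ m ≤ 1 := by omega
  have q5 : 1 + (m - 1) = m := by omega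
  have q6 : n - m + 1 + (m - 1) = n := by omega
  subst e1 e2 e
  constructor
  · simp only [List.filter_append, List.filter_cons, (high _ hπ₂).1, (high _ hθ₂).1,
      (high _ hτ₂).1, (low _ hπ₁).1, (low _ hτ₁).1]
    simp [q1, q3]
  · simp only [List.filter_append, List.filter_cons, (high _ hπ₂).2, (high _ hθ₂).2,
      (high _ hτ₂).2, (low _ hπ₁).2, (low _ hτ₁).2]
    simp [q2, q4, q5, q6]

theorem LAv.sub {L L' : List ℕ} (h : LAv L) (hs : L'.Sublist L) : LAv L' :=
  fun a b c d h' => h a b c d (h'.trans hs)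

theorem LAv.of_map {L : List ℕ} {t : ℕ} (h : LAv (L.map (· + t))) : LAv L := by
  intro a b c d hs h1 h2 h3
  exact h (a + t) (b + t) (c + t) (d + t) (by simpa using hs.map (· + t))
    (by omega) (by omega) (by omega)

theorem exists_unshift {t : ℕ} {L : List ℕ} (h : ∀ x ∈ L, t ≤ x) :
    ∃ L' : List ℕ, L = L'.map (· + t) := by
  refine ⟨L.map (· - t), ?_⟩
  rw [List.map_map]
  symm
  conv_rhs => rw [← List.map_id L]
  apply List.map_congr_left
  intro x hx
  have := h x hx
  simp; omega

theorem exists_factors {n k : ℕ} {w : List ℕ} (hk : 2 ≤ k) (hw : IsW n w) (hav : LAv w)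
    {π θ τ : List ℕ} (e : w = π ++ 1 :: (θ ++ n :: τ)) (hθ : θ.length + 1 = k) :
    ∃ m : ℕ, 2 ≤ m ∧ m ≤ n - 1 ∧ ∃ π₁ τ₁ π₂ θ₂ τ₂ : List ℕ,
      IsW m (π₁ ++ 1 :: m :: τ₁) ∧ LAv (π₁ ++ 1 :: m :: τ₁) ∧
      IsW (n - m + 1) (π₂ ++ 1 :: (θ₂ ++ (n - m + 1) :: τ₂)) ∧
      LAv (π₂ ++ 1 :: (θ₂ ++ (n - m + 1) :: τ₂)) ∧ θ₂.length + 1 = k - 1 ∧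
      w = π₂.map (· + (m - 1)) ++ π₁ ++ 1 :: m ::
          (θ₂.map (· + (m - 1)) ++ n :: (τ₂.map (· + (m - 1)) ++ τ₁)) := by
  obtain ⟨m, θ, rfl⟩ : ∃ m θ', θ = m :: θ' := by
    cases θ with
    | nil => simp at hθ; omega
    | cons a b => exact ⟨a, b, rfl⟩
  have hnd := hw.1
  have hb : ∀ x ∈ w, 1 ≤ x ∧ x ≤ n := fun x hx => (hw.2 x).1 hx
  have hbm := hb m (by simp [e])
  have hm1 : m ≠ 1 := by
    rintro rfl; rw [e] at hnd; simp [List.nodup_append] at hnd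
  have hmn : m ≠ n := by
    rintro rfl; rw [e] at hnd; simp [List.nodup_append] at hnd
  have hmπ : m ∉ π := by
    intro h; rw [e] at hnd; simp [List.nodup_append] at hnd; grind
  have hmθ : m ∉ θ := by
    intro h; rw [e] at hnd; simp [List.nodup_append] at hnd; grind
  have hmτ : m ∉ τ := by
    intro h; rw [e] at hnd; simp [List.nodup_append] at hnd; grind
  have h1θ : 1 ∉ θ := by
    intro h; rw [e] at hnd; simp [List.nodup_append] at hnd; grind
  have sπ := split_filter hmπ (by
    intro s b hs h1 h2
    have hbn : b ≤ n := (hb b (by rw [e]; simp [hs.subset (show b ∈ [s, b] by simp)])).2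
    have hbn' : b ≠ n := by
      rintro rfl
      have : b ∈ π := hs.subset (by simp)
      rw [e] at hnd; simp [List.nodup_append] at hnd; grind
    refine hav s b m n ?_ h1 h2 (by omega)
    rw [e]
    have : [m, n].Sublist (1 :: (m :: θ ++ n :: τ)) := by
      apply List.Sublist.cons
      simp
    exact hs.append this)
  have sτ := split_filter hmτ (by
    intro s b hs h1 h2
    have hs1 : s ≠ 1 := by
      rintro rfl
      have : 1 ∈ τ := hs.subset (by simp)
      rw [e] at hnd; simp [List.nodup_append] at hnd; grind
    have hs2 := (hb s (by rw [e]; simp [hs.subset (show s ∈ [s, b] by simp)])).1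
    refine hav 1 m s b ?_ (by omega) h1 h2
    rw [e]
    refine List.Sublist.trans ?_ (List.sublist_append_right _ _)
    simp only [List.cons_append]
    refine (List.Sublist.cons_cons _ (List.Sublist.cons_cons _ ?_))
    exact (hs.cons n).trans (List.sublist_append_right _ _))
  have hθm : ∀ x ∈ θ, m < x := by
    intro x hx
    by_contra hc
    have h1 : x ≠ m := by rintro rfl; exact hmθ hx
    have h2 : x ≠ 1 := by rintro rfl; exact h1θ hx
    have h3 := hb x (by simp [e, hx])
    refine hav 1 m x n ?_ (by omega) (by omega) (by omega)
    rw [e]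
    refine List.Sublist.trans ?_ (List.sublist_append_right _ _)
    simp only [List.cons_append]
    refine (List.Sublist.cons_cons _ (List.Sublist.cons_cons _ ?_))
    exact (List.singleton_sublist.2 hx).append (l₁ := [x]) (r₁ := [n]) (by simp)
  obtain ⟨π₂, hπ₂⟩ := exists_unshift (t := m - 1) (L := π.filter (m < ·)) (by
    intro x hx; simp at hx; omega)
  obtain ⟨τ₂, hτ₂⟩ := exists_unshift (t := m - 1) (L := τ.filter (m < ·)) (by
    intro x hx; simp at hx; omega)
  obtain ⟨θ₂, hθ₂⟩ := exists_unshift (t := m - 1) (L := θ) (by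
    intro x hx; have := hθm x hx; omega)
  have q1 : ¬ n ≤ m := by omega
  have q2 : m ≤ n := by omega
  have q3 : 1 ≤ m := by omega
  have q4 : ¬ m ≤ 1 := by omega
  have q5 : 1 + (m - 1) = m := by omega
  have q6 : n - m + 1 + (m - 1) = n := by omega
  have elow : ∀ L : List ℕ, m ∉ L → L.filter (· ≤ m) = L.filter (· < m) := by
    intro L hL
    apply List.filter_congr
    intro x hx
    have : x ≠ m := by rintro rfl; exact hL hx
    simp; omega
  have ehigh : ∀ L : List ℕ, m ∉ L → L.filter (m ≤ ·) = L.filter (m < ·) := by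
    intro L hL
    apply List.filter_congr
    intro x hx
    have : x ≠ m := by rintro rfl; exact hL hx
    simp; omega
  have tlow : θ.filter (· < m) = [] := by
    rw [List.filter_eq_nil_iff]
    intro x hx; have := hθm x hx; simp; omega
  have thigh : θ.filter (m < ·) = θ := by
    rw [List.filter_eq_self]
    intro x hx; have := hθm x hx; simp; omega
  have E1 : w.filter (· ≤ m) = π.filter (· < m) ++ 1 :: m :: τ.filter (· < m) := by
    rw [e]
    simp only [List.cons_append, List.filter_append, List.filter_cons, elow _ hmπ, elow _ hmτ,
      elow _ hmθ, tlow]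
    simp [q1, q3]
  have E2 : w.filter (m ≤ ·) =
      (π₂ ++ 1 :: (θ₂ ++ (n - m + 1) :: τ₂)).map (· + (m - 1)) := by
    rw [e]
    simp only [List.cons_append, List.filter_append, List.filter_cons, ehigh _ hmπ, ehigh _ hmτ,
      ehigh _ hmθ, thigh, hπ₂, hτ₂]
    rw [hθ₂]
    simp [q2, q4, q5, q6]
  refine ⟨m, by omega, by omega, π.filter (· < m), τ.filter (· < m), π₂, θ₂, τ₂,
    ?_, ?_, ?_, ?_, ?_, ?_⟩
  · rw [← E1]
    refine ⟨hnd.filter _, ?_⟩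
    intro x
    simp [hw.2]
    omega
  · rw [← E1]
    exact hav.sub List.filter_sublist
  · have hn' : (w.filter (m ≤ ·)).Nodup := hnd.filter _
    rw [E2] at hn'
    refine ⟨hn'.of_map _, ?_⟩
    intro x
    have : x + (m - 1) ∈ w.filter (m ≤ ·) ↔ x ∈ (π₂ ++ 1 :: (θ₂ ++ (n - m + 1) :: τ₂)) := by
      rw [E2, List.mem_map]
      constructor
      · rintro ⟨y, hy, h⟩
        have : y = x := by simpa using h
        exact this ▸ hy
      · intro h
        exact ⟨x, h, rfl⟩
    rw [← this]
    simp [hw.2]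
    omega
  · apply LAv.of_map (t := m - 1)
    rw [← E2]
    exact hav.sub List.filter_sublist
  · have := congrArg List.length hθ₂
    simp at this hθ
    omega
  · rw [← hπ₂, ← hθ₂, ← sπ, ← hτ₂, ← sτ]
    rw [e]
    simp

/-- every `σ ∈ S_{n,k}^{1≺n}(1324)` with `n ≥ 3`, `k ≥ 2` factors uniquely
as `σ = σ₁ ⊙ σ₂` with `σ₁ ∈ S_{m,1}^{1≺m}(1324)` primitive, `2 ≤ m ≤ n - 1`, and
`σ₂ ∈ S_{ℓ,k-1}^{1≺ℓ}(1324)`, `ℓ = n - m + 1`. -/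
theorem stmt_4 (n k : ℕ) (hn : 3 ≤ n) (hk : 2 ≤ k)
    (σ : Equiv.Perm (Fin n)) (hσ : σ ∈ SPerm n 1 k) :
    ∃! d : Σ m : ℕ, Equiv.Perm (Fin m) × Equiv.Perm (Fin (n - m + 1)),
      2 ≤ d.1 ∧ d.1 ≤ n - 1 ∧
      d.2.1 ∈ SPerm d.1 1 1 ∧
      d.2.2 ∈ SPerm (n - d.1 + 1) 1 (k - 1) ∧
      ∃ π₁ τ₁ π₂ θ₂ τ₂ : List ℕ,
        word d.2.1 = π₁ ++ 1 :: d.1 :: τ₁ ∧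
        word d.2.2 = π₂ ++ 1 :: (θ₂ ++ (n - d.1 + 1) :: τ₂) ∧
        word σ = π₂.map (· + (d.1 - 1)) ++ π₁ ++ 1 :: d.1 ::
          (θ₂.map (· + (d.1 - 1)) ++ n :: (τ₂.map (· + (d.1 - 1)) ++ τ₁)) := by
  have hw := word_isW σ
  apply existsUnique_of_exists_of_unique
  · obtain ⟨hav, π, θ, τ, e, hθ⟩ := (sperm_iff (by omega) (by omega) σ).1 hσ
    obtain ⟨m, h2, hm, π₁, τ₁, π₂, θ₂, τ₂, w1, a1, w2, a2, hl, E⟩ :=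
      exists_factors hk hw hav e hθ
    obtain ⟨σ₁, hσ₁⟩ := word_surj w1
    obtain ⟨σ₂, hσ₂⟩ := word_surj w2
    refine ⟨⟨m, σ₁, σ₂⟩, h2, hm, ?_, ?_, π₁, τ₁, π₂, θ₂, τ₂, hσ₁, hσ₂, E⟩
    · rw [sperm_iff (by dsimp only; omega) (by omega)]
      exact ⟨hσ₁ ▸ a1, π₁, [], τ₁, by simpa using hσ₁, rfl⟩
    · rw [sperm_iff (by omega) (by omega)]
      exact ⟨hσ₂ ▸ a2, π₂, θ₂, τ₂, hσ₂, hl⟩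
  · rintro ⟨m, σ₁, σ₂⟩ ⟨m', σ₁', σ₂'⟩
      ⟨h2, hm, -, -, π₁, τ₁, π₂, θ₂, τ₂, e1, e2, e⟩
      ⟨h2', hm', -, -, π₁', τ₁', π₂', θ₂', τ₂', e1', e2', e'⟩
    dsimp only at *
    have hnd := hw.1
    rw [e] at hnd
    have hs := (split_unique hnd (e.symm.trans e')).2
    obtain rfl : m = m' := by
      simp only [List.cons.injEq] at hs
      exact hs.1
    obtain ⟨f1, f2⟩ := factors h2 hm (word_isW σ₁) (word_isW σ₂) e1 e2 e
    obtain ⟨f1', f2'⟩ := factors h2 hm (word_isW σ₁') (word_isW σ₂') e1' e2' e'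
    have g1 : σ₁ = σ₁' := word_inj (f1.symm.trans f1')
    have g2 : σ₂ = σ₂' := word_inj (List.map_injective_iff.2
      (add_left_injective (m - 1)) (f2.symm.trans f2'))
    rw [g1, g2]
end

section
/- Let a_{n,k} = |S_{n,k}^{1≺n}(1324)|. For all n ≥ 3 and 2 ≤ k ≤ n−1, a_{n,k} = Σ_{m=2}^{n−k+1} a_{m,1} · a_{n−m+1,k−1}. -/
def PA (n k : ℕ) (f : ℕ → ℕ) : Prop :=
  Function.Injective f ∧ (∀ x, x < n → f x < n) ∧ (∀ x, n ≤ x → f x = x) ∧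
  (∀ a b c d, a < b → b < c → c < d → d < n → f a < f c → f c < f b → f b < f d → False) ∧
  ∃ p, p + k < n ∧ f p = 0 ∧ f (p + k) = n - 1

def toF {n : ℕ} (σ : Equiv.Perm (Fin n)) (x : ℕ) : ℕ :=
  if h : x < n then (σ ⟨x, h⟩ : ℕ) else x

theorem toF_inj {n : ℕ} : Function.Injective (toF (n := n)) := by
  intro σ τ h
  ext ⟨x, hx⟩
  have := congrFun h x
  simpa [toF, hx] using this

theorem transfer (n k : ℕ) : (SPerm n 1 k).ncard = {f | PA n k f}.ncard := by
  rw [← Set.ncard_image_of_injective (SPerm n 1 k) toF_inj]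
  congr 1
  ext f
  constructor
  · rintro ⟨σ, ⟨hav, hn, ha, h1, -⟩, rfl⟩
    refine ⟨?_, ?_, ?_, ?_, ?_⟩
    · intro x y hxy
      unfold toF at hxy
      split_ifs at hxy with h1 h2 h2
      · have := σ.injective (Fin.ext hxy)
        simpa using this
      · have := (σ ⟨x, h1⟩).2
        omega
      · have := (σ ⟨y, h2⟩).2
        omega
      · exact hxy
    · intro x hx
      simp [toF, hx]
    · intro x hx
      simp [toF, hx]
    · intro a b c d hab hbc hcd hd h1 h2 h3
      have ha : a < n := by omega
      have hb : b < n := by omega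
      have hc : c < n := by omega
      simp only [toF, ha, hb, hc, hd, dif_pos] at h1 h2 h3
      exact hav ⟨⟨a, ha⟩, ⟨b, hb⟩, ⟨c, hc⟩, ⟨d, hd⟩, hab, hbc, hcd, h1, h2, h3⟩
    · refine ⟨(σ.symm ⟨1 - 1, ha⟩ : Fin n), ?_, ?_, ?_⟩
      · rw [← h1]; exact (σ.symm ⟨n - 1, hn⟩).2
      · simp [toF]
      · rw [← h1]; simp [toF]
  · rintro ⟨hinj, hlt, hge, hav, p, hp, h0, h1⟩
    let g : Fin n → Fin n := fun x => ⟨f x, hlt x x.2⟩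
    have hg : Function.Injective g := by
      intro x y hxy
      have : f x = f y := congrArg Fin.val hxy
      exact Fin.ext (hinj this)
    let σ : Equiv.Perm (Fin n) := Equiv.ofBijective g (Finite.injective_iff_bijective.mp hg)
    have hσ : ∀ x : Fin n, ((σ x : Fin n) : ℕ) = f x := fun x => rfl
    have e1 : ∀ (v x : ℕ) (hv : v < n) (hx : x < n), f x = v → σ.symm ⟨v, hv⟩ = ⟨x, hx⟩ := by
      intro v x hv hx h
      rw [Equiv.symm_apply_eq]
      apply Fin.ext
      rw [hσ]; exact h.symm
    refine ⟨σ, ⟨?_, by omega, by omega, ?_, ?_⟩, ?_⟩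
    · rintro ⟨i, j, k, l, hij, hjk, hkl, h1, h2, h3⟩
      exact hav i j k l hij hjk hkl l.2 h1 h2 h3
    · rw [e1 (n-1) (p+k) (by omega) hp h1, e1 (1-1) p (by omega) (by omega) (by omega)]
    · intro b hb; omega
    · funext x
      unfold toF
      split_ifs with h
      · rfl
      · exact (hge x (by omega)).symm

theorem PA_finite (n k : ℕ) : {f | PA n k f}.Finite := by
  have : Set.Finite {f : ℕ → ℕ | ∃ g : Fin n → Fin n, f = fun x => if h : x < n then (g ⟨x, h⟩ : ℕ) else x} := by
    refine (Set.finite_range (fun (g : Fin n → Fin n) (x : ℕ) => if h : x < n then (g ⟨x, h⟩ : ℕ) else x)).subset ?_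
    rintro f ⟨g, rfl⟩
    exact ⟨g, rfl⟩
  refine this.subset ?_
  rintro f ⟨hinj, hlt, hge, -⟩
  refine ⟨fun x => ⟨f x, hlt x x.2⟩, ?_⟩
  funext x
  split_ifs with h
  · rfl
  · exact hge x (by omega)

theorem surj_of {n : ℕ} {f : ℕ → ℕ} (hinj : Function.Injective f) (hlt : ∀ x, x < n → f x < n)
    (v : ℕ) (hv : v < n) : ∃ x, x < n ∧ f x = v := by
  have h1 : (Finset.range n).image f = Finset.range n := by
    apply Finset.eq_of_subset_of_card_le
    · intro y hy
      simp only [Finset.mem_image, Finset.mem_range] at *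
      obtain ⟨x, hx, rfl⟩ := hy
      exact hlt x hx
    · rw [Finset.card_image_of_injective _ hinj]
  have : v ∈ (Finset.range n).image f := by rw [h1]; simpa using hv
  simpa using this

/-- structure lemma -/
theorem struct {n k : ℕ} (hk : 2 ≤ k) {f : ℕ → ℕ} (hf : PA n k f) :
    ∃ p α γ m, α ≤ p ∧ p + k < γ ∧ γ ≤ n ∧ f p = 0 ∧ f (p + 1) + 1 = m ∧ f (p + k) = n - 1 ∧
      2 ≤ m ∧ (∀ q, q < n → (f q < m ↔ (α ≤ q ∧ q ≤ p + 1) ∨ γ ≤ q)) ∧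
      m + α + γ = p + 2 + n := by
  obtain ⟨hinj, hlt, hge, hav, p, hp, h0, h1⟩ := hf
  obtain ⟨x, hx⟩ : ∃ x, f (p + 1) = x := ⟨_, rfl⟩
  have hx0 : x ≠ 0 := by
    intro h
    have := @hinj (p+1) p (by omega)
    omega
  have hxn : x < n - 1 := by
    have := hlt (p+1) (by omega)
    have := @hinj (p+1) (p+k)
    omega
  have exα : ∃ q, f q ≤ x := ⟨p, by omega⟩
  have exγ : ∃ q, p + k < q ∧ (n ≤ q ∨ f q ≤ x) := ⟨n, by omega, by omega⟩
  classical
  obtain ⟨α, hα, hαm⟩ : ∃ α, f α ≤ x ∧ ∀ q, q < α → ¬ f q ≤ x :=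
    ⟨Nat.find exα, Nat.find_spec exα, fun q hq => Nat.find_min exα hq⟩
  obtain ⟨γ, ⟨hγ1, hγ2⟩, hγm⟩ : ∃ γ, (p + k < γ ∧ (n ≤ γ ∨ f γ ≤ x)) ∧
      ∀ q, q < γ → ¬ (p + k < q ∧ (n ≤ q ∨ f q ≤ x)) :=
    ⟨Nat.find exγ, Nat.find_spec exγ, fun q hq => Nat.find_min exγ hq⟩
  have hαp : α ≤ p := by
    by_contra h
    exact hαm p (by omega) (by omega)
  have hγn : γ ≤ n := by
    by_contra h
    exact hγm n (by omega) ⟨by omega, by omega⟩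
  have key : ∀ q, q < n → (f q < x + 1 ↔ (α ≤ q ∧ q ≤ p + 1) ∨ γ ≤ q) := by
    intro q hq
    have hne : ∀ r, f q = f r → q = r := fun r h => hinj h
    constructor
    · intro h
      by_contra hc
      rcases lt_or_ge q α with h2 | h2
      · exact hαm q h2 (by omega)
      rcases lt_or_ge q (p + k) with h3 | h3
      · have := hne (p+1)
        exact hav p (p+1) q (p+k) (by omega) (by omega) h3 hp
          (by have := hne p; omega) (by omega) (by omega)
      rcases eq_or_lt_of_le h3 with h4 | h4
      · subst h4; omega
      · exact hγm q (by omega) ⟨h4, by omega⟩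
    · intro h
      by_contra hc
      have a1 := hne (p+1)
      have a2 := hne p
      have a3 := hne (p+k)
      have a4 := hlt q hq
      rcases h with h | h
      · have hqa : q ≠ α := by rintro rfl; omega
        have : f α ≠ x := fun h => by
          have := @hinj α (p+1) (by omega)
          omega
        have hq1 : q ≠ p + 1 := by rintro rfl; omega
        exact hav α q (p+1) (p+k) (by omega) (by omega) (by omega) hp (by omega) (by omega)
          (by omega)
      · have hqa : q ≠ γ := by rintro rfl; omega
        have : f γ ≠ x := fun h => by
          have := @hinj γ (p+1) (by omega)
          omega
        have : f γ ≠ 0 := fun h => by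
          have := @hinj γ p (by omega)
          omega
        exact hav p (p+1) γ q (by omega) (by omega) (by omega) hq (by omega) (by omega) (by omega)
  refine ⟨p, α, γ, x + 1, hαp, hγ1, hγn, h0, by omega, h1, by omega, key, ?_⟩
  have c1 : ((Finset.Ico α (p+2)) ∪ (Finset.Ico γ n)).image f = Finset.range (x+1) := by
    ext v
    simp only [Finset.mem_image, Finset.mem_union, Finset.mem_Ico, Finset.mem_range]
    constructor
    · rintro ⟨q, hq, rfl⟩
      exact (key q (by omega)).2 (by omega)
    · intro hv
      obtain ⟨q, hq, rfl⟩ := surj_of hinj hlt v (by omega)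
      have := (key q hq).1 hv
      exact ⟨q, by omega, rfl⟩
  have c2 := congrArg Finset.card c1
  rw [Finset.card_image_of_injective _ hinj, Finset.card_union_of_disjoint, Nat.card_Ico,
    Nat.card_Ico, Finset.card_range] at c2
  · omega
  · rw [Finset.disjoint_left]
    intro q
    simp only [Finset.mem_Ico]
    omega

def glue (α β m N : ℕ) (τ ρ : ℕ → ℕ) (q : ℕ) : ℕ :=
  if q < α then ρ q + (m - 1)
  else if q < α + β + 2 then τ (q - α)
  else if q < N + β + 1 then ρ (q - β - 1) + (m - 1)
  else if q < N + m - 1 then τ (q - (N - 1))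
  else q

/-- gluing lands in the right set -/
theorem glue_PA {α β m N k : ℕ} {τ ρ : ℕ → ℕ} (hm : 2 ≤ m) (hk : 2 ≤ k)
    (hτ : PA m 1 τ) (hρ : PA N (k - 1) ρ) (hβ : τ β = 0) (hα : ρ α = 0) :
    PA (N + m - 1) k (glue α β m N τ ρ) ∧ glue α β m N τ ρ (α + β) = 0 ∧
      glue α β m N τ ρ (α + β + 1) + 1 = m := by
  obtain ⟨τi, τl, τg, τa, p, hp, hp0, hp1⟩ := hτ
  obtain rfl : p = β := τi (by omega)
  obtain ⟨ρi, ρl, ρg, ρa, r, hr, hr0, hr1⟩ := hρ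
  obtain rfl : r = α := ρi (by omega)
  set f := glue r p m N τ ρ with hf
  -- small positions
  let s : ℕ → ℕ := fun q => if q < r + p + 2 then q - r else q - (N - 1)
  let b : ℕ → ℕ := fun q => if q < r then q else q - p - 1
  have ρpos : ∀ x, x ≠ r → 0 < ρ x := by
    intro x hx
    rcases Nat.eq_zero_or_pos (ρ x) with h | h
    · exact absurd (ρi (h.trans hr0.symm)) hx
    · exact h
  have cl : ∀ q, q < N + m - 1 →
      (((r ≤ q ∧ q ≤ r + p + 1) ∨ N + p + 1 ≤ q) ∧ s q < m ∧ f q = τ (s q) ∧ f q < m) ∨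
      (¬ ((r ≤ q ∧ q ≤ r + p + 1) ∨ N + p + 1 ≤ q) ∧ b q < N ∧ b q ≠ r ∧
        f q = ρ (b q) + (m - 1) ∧ m ≤ f q ∧ f q < N + m - 1) := by
    intro q hq
    by_cases h : (r ≤ q ∧ q ≤ r + p + 1) ∨ N + p + 1 ≤ q
    · left
      have h1 : s q < m := by simp only [s]; split_ifs <;> omega
      have h2 : f q = τ (s q) := by
        simp only [hf, glue, s]
        split_ifs <;> first | rfl | omega
      exact ⟨h, h1, h2, h2 ▸ τl _ h1⟩
    · right
      have h1 : b q < N := by simp only [b]; split_ifs <;> omega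
      have h2 : b q ≠ r := by simp only [b]; split_ifs <;> omega
      have h3 : f q = ρ (b q) + (m - 1) := by
        simp only [hf, glue, b]
        split_ifs <;> first | rfl | omega
      have := ρpos _ h2
      have := ρl _ h1
      exact ⟨h, h1, h2, h3, by omega, by omega⟩
  have out : ∀ q, N + m - 1 ≤ q → f q = q := by
    intro q hq
    simp only [hf, glue]
    split_ifs <;> first | rfl | omega
  have lt : ∀ q, q < N + m - 1 → f q < N + m - 1 := by
    intro q hq
    rcases cl q hq with h | h <;> omega
  have e0 : f (r + p) = 0 := by
    rcases cl (r+p) (by omega) with h | h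
    · rw [h.2.2.1, ← hp0]; congr 1; simp only [s]; split_ifs <;> omega
    · omega
  have e1 : f (r + p + 1) = m - 1 := by
    rcases cl (r+p+1) (by omega) with h | h
    · rw [h.2.2.1, ← hp1]; congr 1; simp only [s]; split_ifs <;> omega
    · omega
  have e2 : f (r + p + k) = N + m - 1 - 1 := by
    rcases cl (r+p+k) (by omega) with h | h
    · omega
    · have : b (r+p+k) = r + (k - 1) := by simp only [b]; split_ifs <;> omega
      rw [h.2.2.2.1, this, hr1]; omega
  have inj : Function.Injective f := by
    intro x y hxy
    rcases lt_or_ge x (N + m - 1) with hx | hx <;> rcases lt_or_ge y (N + m - 1) with hy | hy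
    · rcases cl x hx with h | h <;> rcases cl y hy with h' | h'
      · have : s x = s y := τi (by omega)
        simp only [s] at this
        split_ifs at this <;> omega
      · omega
      · omega
      · have : b x = b y := ρi (by omega)
        simp only [b] at this
        split_ifs at this <;> omega
    · have := lt x hx; have := out y hy; omega
    · have := lt y hy; have := out x hx; omega
    · rw [out x hx, out y hy] at hxy; exact hxy
  refine ⟨⟨inj, lt, out, ?_, r + p, by omega, e0, e2⟩, e0, by omega⟩
  have smono : ∀ x y, x < y → ((r ≤ x ∧ x ≤ r + p + 1) ∨ N + p + 1 ≤ x) →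
      ((r ≤ y ∧ y ≤ r + p + 1) ∨ N + p + 1 ≤ y) → s x < s y := by
    intro x y h1 h2 h3
    simp only [s]; split_ifs <;> omega
  have bmono : ∀ x y, x < y → ¬ ((r ≤ x ∧ x ≤ r + p + 1) ∨ N + p + 1 ≤ x) →
      ¬ ((r ≤ y ∧ y ≤ r + p + 1) ∨ N + p + 1 ≤ y) → b x < b y := by
    intro x y h1 h2 h3
    simp only [b]; split_ifs <;> omega
  intro w x y z hwx hxy hyz hz h1 h2 h3
  rcases cl w (by omega) with W | W
  · rcases cl z hz with Z | Z
    · rcases cl x (by omega) with X | X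
      · rcases cl y (by omega) with Y | Y
        · exact τa (s w) (s x) (s y) (s z) (smono _ _ hwx W.1 X.1) (smono _ _ hxy X.1 Y.1)
            (smono _ _ hyz Y.1 Z.1) Z.2.1 (by omega) (by omega) (by omega)
        · omega
      · omega
    · rcases cl x (by omega) with X | X <;> rcases cl y (by omega) with Y | Y
      · have hx1 : x ≠ r + p + 1 := by rintro rfl; omega
        have hy1 : y ≠ r + p + 1 := by rintro rfl; omega
        have hsz : s (r + p + 1) = p + 1 := by simp only [s]; split_ifs <;> omega
        have hxm : f x ≠ m - 1 := fun h => hx1 (inj (by omega))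
        have := smono y (r + p + 1) (by omega) Y.1 (by omega)
        exact τa (s w) (s x) (s y) (p + 1) (smono _ _ hwx W.1 X.1) (smono _ _ hxy X.1 Y.1)
            (by omega) (by omega) (by omega) (by omega) (by omega)
      · omega
      · omega
      · have : r < b x := by simp only [b]; split_ifs <;> omega
        have := ρpos (b y) Y.2.2.1
        exact ρa r (b x) (b y) (b z) (by omega) (bmono _ _ hxy X.1 Y.1) (bmono _ _ hyz Y.1 Z.1)
          Z.2.1 (by omega) (by omega) (by omega)
  · rcases cl x (by omega) with X | X
    · omega
    rcases cl y (by omega) with Y | Y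
    · omega
    rcases cl z (by omega) with Z | Z
    · omega
    exact ρa (b w) (b x) (b y) (b z) (bmono _ _ hwx W.1 X.1) (bmono _ _ hxy X.1 Y.1)
      (bmono _ _ hyz Y.1 Z.1) Z.2.1 (by omega) (by omega) (by omega)

/-- gluing is injective -/
theorem glue_inj {α β α' β' m N k : ℕ} {τ ρ τ' ρ' : ℕ → ℕ} (hm : 2 ≤ m) (hk : 2 ≤ k)
    (hτ : PA m 1 τ) (hρ : PA N (k - 1) ρ) (hβ : τ β = 0) (hα : ρ α = 0)
    (hτ' : PA m 1 τ') (hρ' : PA N (k - 1) ρ') (hβ' : τ' β' = 0) (hα' : ρ' α' = 0)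
    (h : glue α β m N τ ρ = glue α' β' m N τ' ρ') : τ = τ' ∧ ρ = ρ' := by
  have G := glue_PA hm hk hτ hρ hβ hα
  have G' := glue_PA hm hk hτ' hρ' hβ' hα'
  have hsum : α + β = α' + β' := by
    apply G.1.1
    rw [G.2.1, h, G'.2.1]
  obtain ⟨τi, τl, τg, τa, p, hp, hp0, hp1⟩ := hτ
  obtain rfl : p = β := τi (by omega)
  obtain ⟨ρi, ρl, ρg, ρa, r, hr, hr0, hr1⟩ := hρ
  obtain rfl : r = α := ρi (by omega)
  obtain ⟨τi', τl', τg', τa', p', hp', hp0', hp1'⟩ := hτ'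
  obtain rfl : p' = β' := τi' (by omega)
  obtain ⟨ρi', ρl', ρg', ρa', r', hr', hr0', hr1'⟩ := hρ'
  obtain rfl : r' = α' := ρi' (by omega)
  have hrr : r = r' := by
    rcases lt_trichotomy r r' with h1 | h1 | h1
    · have := congrFun h r
      simp only [glue, h1, lt_irrefl, if_true, if_false] at this
      rw [if_pos (by omega)] at this
      have := τl (r - r) (by omega)
      have := @ρi' r r'
      omega
    · exact h1
    · have := congrFun h r'
      simp only [glue, h1, lt_irrefl, if_true, if_false] at this
      rw [if_pos (by omega)] at this
      have := τl' (r' - r') (by omega)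
      have := @ρi r' r
      omega
  subst hrr
  obtain rfl : p = p' := by omega
  constructor
  · funext x
    rcases lt_or_ge x m with hx | hx
    · rcases lt_or_ge x (p + 2) with h2 | h2
      · have := congrFun h (r + x)
        simp only [glue] at this
        rw [if_neg (by omega), if_pos (by omega), if_neg (by omega), if_pos (by omega)] at this
        simpa using this
      · have := congrFun h (x + (N - 1))
        simp only [glue] at this
        rw [if_neg (by omega), if_neg (by omega), if_neg (by omega), if_pos (by omega),
          if_neg (by omega), if_neg (by omega), if_neg (by omega), if_pos (by omega)] at this
        simpa using this
    · rw [τg x hx, τg' x hx]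
  · funext x
    rcases lt_or_ge x N with hx | hx
    · rcases lt_trichotomy x r with h2 | h2 | h2
      · have := congrFun h x
        simp only [glue] at this
        rw [if_pos (by omega), if_pos (by omega)] at this
        omega
      · rw [h2, hr0, hr0']
      · have := congrFun h (x + p + 1)
        simp only [glue] at this
        rw [if_neg (by omega), if_neg (by omega), if_pos (by omega),
          if_neg (by omega), if_neg (by omega), if_pos (by omega)] at this
        have e : x + p + 1 - p - 1 = x := by omega
        rw [e] at this
        omega
    · rw [ρg x hx, ρg' x hx]

/-- gluing is surjective -/
theorem glue_surj {n k : ℕ} (hk : 2 ≤ k) {f : ℕ → ℕ} (hf : PA n k f) {p m : ℕ}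
    (hp0 : f p = 0) (hp1 : f (p + 1) + 1 = m) :
    2 ≤ m ∧ m ≤ n - k + 1 ∧ ∃ α β τ ρ, PA m 1 τ ∧ PA (n - m + 1) (k - 1) ρ ∧ τ β = 0 ∧ ρ α = 0 ∧
      glue α β m (n - m + 1) τ ρ = f := by
  obtain ⟨p', α, γ, m', hα, hγ, hγn, h0, h1, h2, hm, key, cnt⟩ := struct hk hf
  obtain ⟨hinj, hlt, hge, hav, -⟩ := hf
  obtain rfl : p' = p := hinj (by omega)
  obtain rfl : m' = m := by omega
  refine ⟨hm, by omega, ?_⟩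
  obtain ⟨N, hN⟩ : ∃ N, N = n - m' + 1 := ⟨_, rfl⟩
  obtain ⟨β, hβ⟩ : ∃ β, β = p' - α := ⟨_, rfl⟩
  rw [← hN]
  let u : ℕ → ℕ := fun x => if x < β + 2 then α + x else x + (N - 1)
  let v : ℕ → ℕ := fun x => if x < α then x else x + β + 1
  have hu : ∀ x, x < m' → u x < n ∧ f (u x) < m' := by
    intro x hx
    have : u x < n ∧ ((α ≤ u x ∧ u x ≤ p' + 1) ∨ γ ≤ u x) := by
      simp only [u]; split_ifs <;> omega
    exact ⟨this.1, (key _ this.1).2 this.2⟩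
  have umono : ∀ x y, x < y → u x < u y := by
    intro x y h; simp only [u]; split_ifs <;> omega
  have vmono : ∀ x y, x < y → v x < v y := by
    intro x y h; simp only [v]; split_ifs <;> omega
  have hvα : f (v α) = m' - 1 := by
    have : v α = p' + 1 := by simp only [v]; split_ifs <;> omega
    rw [this]; omega
  have hv : ∀ x, x < N → v x < n ∧ m' - 1 ≤ f (v x) := by
    intro x hx
    have h1 : v x < n := by simp only [v]; split_ifs <;> omega
    refine ⟨h1, ?_⟩
    by_cases hxa : x = α
    · rw [hxa, hvα]
    · have : ¬ ((α ≤ v x ∧ v x ≤ p' + 1) ∨ γ ≤ v x) := by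
        simp only [v]; split_ifs <;> omega
      have := mt (key _ h1).1 this
      omega
  let τ : ℕ → ℕ := fun x => if x < m' then f (u x) else x
  let ρ : ℕ → ℕ := fun x => if x < N then f (v x) - (m' - 1) else x
  have τ1 : ∀ x, x < m' → τ x = f (u x) := fun x hx => if_pos hx
  have τ2 : ∀ x, m' ≤ x → τ x = x := fun x hx => if_neg (by omega)
  have ρ1 : ∀ x, x < N → ρ x + (m' - 1) = f (v x) := by
    intro x hx
    have := (hv x hx).2
    simp only [ρ, if_pos hx]; omega
  have ρ2 : ∀ x, N ≤ x → ρ x = x := fun x hx => if_neg (by omega)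
  have τb : τ β = 0 := by
    rw [τ1 β (by omega), ← h0]; congr 1; simp only [u]; split_ifs <;> omega
  have ρa : ρ α = 0 := by
    have := ρ1 α (by omega)
    omega
  have τlt : ∀ x, x < m' → τ x < m' := fun x hx => by rw [τ1 x hx]; exact (hu x hx).2
  have ρlt : ∀ x, x < N → ρ x < N := fun x hx => by
    have := ρ1 x hx
    have := hlt _ (hv x hx).1
    omega
  refine ⟨α, β, τ, ρ, ⟨?_, τlt, τ2, ?_, β, by omega, τb, ?_⟩,
    ⟨?_, ρlt, ρ2, ?_, α, by omega, ρa, ?_⟩, τb, ρa, ?_⟩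
  · intro x y hxy
    rcases lt_or_ge x m' with hx | hx <;> rcases lt_or_ge y m' with hy | hy
    · rw [τ1 x hx, τ1 y hy] at hxy
      have := hinj hxy
      have := umono x y
      have := umono y x
      omega
    · have := τlt x hx; have := τ2 y hy; omega
    · have := τlt y hy; have := τ2 x hx; omega
    · rw [τ2 x hx, τ2 y hy] at hxy; exact hxy
  · intro a b c d hab hbc hcd hd g1 g2 g3
    rw [τ1 _ (by omega), τ1 _ (by omega)] at g1 g2 g3
    exact hav _ _ _ _ (umono _ _ hab) (umono _ _ hbc) (umono _ _ hcd) (hu d hd).1 g1 g2 g3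
  · rw [τ1 _ (by omega)]
    have : u (β + 1) = p' + 1 := by simp only [u]; split_ifs <;> omega
    rw [this]; omega
  · intro x y hxy
    rcases lt_or_ge x N with hx | hx <;> rcases lt_or_ge y N with hy | hy
    · have a1 := ρ1 x hx
      have a2 := ρ1 y hy
      have := @hinj (v x) (v y) (by omega)
      have := vmono x y
      have := vmono y x
      omega
    · have := ρlt x hx; have := ρ2 y hy; omega
    · have := ρlt y hy; have := ρ2 x hx; omega
    · rw [ρ2 x hx, ρ2 y hy] at hxy; exact hxy
  · intro a b c d hab hbc hcd hd g1 g2 g3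
    have a1 := ρ1 a (by omega)
    have a2 := ρ1 b (by omega)
    have a3 := ρ1 c (by omega)
    have a4 := ρ1 d (by omega)
    exact hav _ _ _ _ (vmono _ _ hab) (vmono _ _ hbc) (vmono _ _ hcd) (hv d hd).1 (by omega)
      (by omega) (by omega)
  · have a1 := ρ1 (α + (k - 1)) (by omega)
    have : v (α + (k - 1)) = p' + k := by simp only [v]; split_ifs <;> omega
    rw [this] at a1; omega
  · funext q
    simp only [glue]
    split_ifs with c1 c2 c3 c4
    · rw [ρ1 q (by omega)]; congr 1; simp only [v]; split_ifs; rfl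
    · rw [τ1 _ (by omega)]; congr 1; simp only [u]; split_ifs <;> omega
    · rw [ρ1 _ (by omega)]; congr 1; simp only [v]; split_ifs <;> omega
    · rw [τ1 _ (by omega)]; congr 1; simp only [u]; split_ifs <;> omega
    · exact (hge q (by omega)).symm

noncomputable def zpos (f : ℕ → ℕ) : ℕ := sInf {p | f p = 0}

theorem zpos_spec {n k : ℕ} {f : ℕ → ℕ} (hf : PA n k f) : f (zpos f) = 0 := by
  obtain ⟨-, -, -, -, p, -, h, -⟩ := hf
  exact Nat.sInf_mem (s := {p | f p = 0}) ⟨p, h⟩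

theorem fiber_card (n k m : ℕ) (hk : 2 ≤ k) (hm : 2 ≤ m) (hmn : m ≤ n) :
    {f | PA n k f ∧ f (zpos f + 1) + 1 = m}.ncard =
      {f | PA m 1 f}.ncard * {f | PA (n - m + 1) (k - 1) f}.ncard := by
  rw [← Set.ncard_prod]
  symm
  refine Set.ncard_congr
    (fun x _ => glue (zpos x.2) (zpos x.1) m (n - m + 1) x.1 x.2) ?_ ?_ ?_
  · rintro ⟨τ, ρ⟩ ⟨hτ, hρ⟩
    have G := glue_PA hm hk hτ hρ (zpos_spec hτ) (zpos_spec hρ)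
    have e : n - m + 1 + m - 1 = n := by omega
    rw [e] at G
    refine ⟨G.1, ?_⟩
    have := G.1.1 ((zpos_spec G.1).trans G.2.1.symm)
    dsimp only
    rw [this]
    exact G.2.2
  · rintro ⟨τ, ρ⟩ ⟨τ', ρ'⟩ ⟨hτ, hρ⟩ ⟨hτ', hρ'⟩ h
    have := glue_inj hm hk hτ hρ (zpos_spec hτ) (zpos_spec hρ) hτ' hρ' (zpos_spec hτ')
      (zpos_spec hρ') h
    exact Prod.ext this.1 this.2
  · rintro f ⟨hf, hfm⟩
    obtain ⟨-, -, α, β, τ, ρ, hτ, hρ, hb, ha, hg⟩ := glue_surj hk hf (zpos_spec hf) hfm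
    refine ⟨(τ, ρ), ⟨hτ, hρ⟩, ?_⟩
    have e1 : zpos τ = β := hτ.1 ((zpos_spec hτ).trans hb.symm)
    have e2 : zpos ρ = α := hρ.1 ((zpos_spec hρ).trans ha.symm)
    simp only [e1, e2, hg]

theorem stmt_5 (n k : ℕ) (hn : 3 ≤ n) (hk : 2 ≤ k) (hkn : k ≤ n - 1) :
    (SPerm n 1 k).ncard =
      ∑ m ∈ Finset.Icc 2 (n - k + 1),
        (SPerm m 1 1).ncard * (SPerm (n - m + 1) 1 (k - 1)).ncard := by
  classical
  simp only [transfer]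
  have hfin := PA_finite n k
  rw [Set.ncard_eq_toFinset_card _ hfin,
    Finset.card_eq_sum_card_fiberwise (f := fun f => f (zpos f + 1) + 1)
      (t := Finset.Icc 2 (n - k + 1))]
  · refine Finset.sum_congr rfl fun m hm => ?_
    rw [Finset.mem_Icc] at hm
    rw [← fiber_card n k m hk hm.1 (by omega), ← Set.ncard_coe_finset]
    congr 1
    ext f
    simp
  · intro f hf
    have hf' : PA n k f := by simpa using hf
    have := glue_surj hk hf' (zpos_spec hf') rfl
    simp only [Finset.coe_Icc, Set.mem_Icc]
    exact ⟨this.1, this.2.1⟩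
end
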